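/- arXiv:2010.07364 — 8 statements merged into one kernel-verified Lean document; each statement's English description precedes it below -/
import Mathlib

section
/- Let p be an odd prime and let α, β ∈ ℚ_p be two p-adic numbers whose Browkin continued fraction algorithms do not terminate before step n. If α and β have the same first n+1 Browkin partial quotients (equivalently, the same n-th convergent), then |α − β|_p < p^{−2n}. -/
/-- `y ∈ 𝒴 = ℤ[1/p] ∩ (−p/2, p/2)`: a possible Browkin partial quotient. -/
def IsBrowkinDigit (p : ℕ) (y : ℚ) : Prop :=
  (∃ z : ℤ, ∃ j : ℕ, y = (z : ℚ) / (p : ℚ) ^ j) ∧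
  -(p : ℚ) / 2 < y ∧ y < (p : ℚ) / 2

/-- `αs` is the sequence of complete quotients and `a` the sequence of partial
quotients of the (non-terminating) Browkin continued fraction algorithm:
`a n = s (αs n)` (i.e. `a n ∈ 𝒴` and `|αs n − a n|_p < 1`) and
`αs (n+1) = 1/(αs n − a n)`. -/
def IsBCF (p : ℕ) [Fact p.Prime] (αs : ℕ → ℚ_[p]) (a : ℕ → ℚ) : Prop :=
  ∀ n, IsBrowkinDigit p (a n) ∧ ‖αs n - (a n : ℚ_[p])‖ < 1 ∧
    αs (n + 1) = (αs n - (a n : ℚ_[p]))⁻¹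

/-! Subtracting a common partial quotient `a` from two complete quotients `x`, `y` and inverting
divides their distance by `‖x - a‖ * ‖y - a‖`. Running `n` steps backwards, the initial distance is
the `n`-th one times `2 * n` such factors. Over `ℚ_[p]` each factor is at most `p⁻¹`, because the
norm takes no value strictly between `p⁻¹` and `1`; the ultrametric inequality through the last
partial quotient bounds the `n`-th distance by `p⁻¹` as well. -/

section CompleteQuotients

variable {K : Type*} [NormedDivisionRing K]

theorem norm_sub_eq_mul_norm_inv_sub_inv {x y : K} (hx : x ≠ 0) (hy : y ≠ 0) :
    ‖x - y‖ = ‖x‖ * ‖y‖ * ‖x⁻¹ - y⁻¹‖ := by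
  have h : dist x⁻¹ y⁻¹ = dist x y / (‖x‖ * ‖y‖) := dist_inv_inv₀ hx hy
  rw [← dist_eq_norm x⁻¹, h, dist_eq_norm, mul_div_cancel₀]
  exact mul_ne_zero (norm_ne_zero_iff.2 hx) (norm_ne_zero_iff.2 hy)

theorem norm_completeQuotient_zero_sub_eq_prod {n : ℕ} {x y a : ℕ → K}
    (hx : ∀ j < n, x j ≠ a j ∧ x (j + 1) = (x j - a j)⁻¹)
    (hy : ∀ j < n, y j ≠ a j ∧ y (j + 1) = (y j - a j)⁻¹) :
    ‖x 0 - y 0‖ = (∏ j ∈ Finset.range n, ‖x j - a j‖ * ‖y j - a j‖) * ‖x n - y n‖ := by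
  induction n with
  | zero => simp
  | succ n ih =>
    obtain ⟨hxa, hx_succ⟩ := hx n n.lt_succ_self
    obtain ⟨hya, hy_succ⟩ := hy n n.lt_succ_self
    have norm_sub_n : ‖x n - y n‖ = ‖x n - a n‖ * ‖y n - a n‖ * ‖x (n + 1) - y (n + 1)‖ := by
      rw [hx_succ, hy_succ, ← norm_sub_eq_mul_norm_inv_sub_inv (sub_ne_zero.2 hxa)
        (sub_ne_zero.2 hya), sub_sub_sub_cancel_right]
    rw [ih (fun j hj ↦ hx j (hj.trans n.lt_succ_self)) fun j hj ↦ hy j (hj.trans n.lt_succ_self),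
      norm_sub_n, Finset.prod_range_succ, mul_assoc (∏ j ∈ Finset.range n, _)]

theorem browkin_same_convergent_close_general [IsUltrametricDist K] {r : ℝ} {n : ℕ}
    {x y a : ℕ → K} (hxr : ∀ j ≤ n, ‖x j - a j‖ ≤ r) (hyr : ∀ j ≤ n, ‖y j - a j‖ ≤ r)
    (hx : ∀ j < n, x j ≠ a j ∧ x (j + 1) = (x j - a j)⁻¹)
    (hy : ∀ j < n, y j ≠ a j ∧ y (j + 1) = (y j - a j)⁻¹) :
    ‖x 0 - y 0‖ ≤ r ^ (2 * n + 1) := by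
  have hr : 0 ≤ r := (norm_nonneg _).trans (hxr n le_rfl)
  have norm_sub_n_le : ‖x n - y n‖ ≤ r := by
    simp only [← dist_eq_norm] at hxr hyr ⊢
    exact (dist_triangle_max _ (a n) _).trans
      (max_le (hxr n le_rfl) (dist_comm (a n) (y n) ▸ hyr n le_rfl))
  calc
    ‖x 0 - y 0‖ = (∏ j ∈ Finset.range n, ‖x j - a j‖ * ‖y j - a j‖) * ‖x n - y n‖ :=
      norm_completeQuotient_zero_sub_eq_prod hx hy
    _ ≤ (∏ _j ∈ Finset.range n, r * r) * r := by
      gcongr with j hj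
      · exact hxr j (Finset.mem_range.1 hj).le
      · exact hyr j (Finset.mem_range.1 hj).le
    _ = r ^ (2 * n + 1) := by
      rw [Finset.prod_const, Finset.card_range, ← sq, ← pow_mul, pow_succ]

end CompleteQuotients

section Padic

variable {p : ℕ} [Fact p.Prime] {x : ℚ_[p]}

theorem padic_norm_lt_zpow_neg_iff_le_inv_pow {m : ℕ} :
    ‖x‖ < (p : ℝ) ^ (-m : ℤ) ↔ ‖x‖ ≤ (p : ℝ)⁻¹ ^ (m + 1) := by
  rw [Padic.norm_lt_pow_iff_norm_le_pow_sub_one, ← neg_add', inv_pow, ← zpow_natCast, ← zpow_neg,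
    Nat.cast_succ]

theorem padic_norm_lt_one_iff_le_inv : ‖x‖ < 1 ↔ ‖x‖ ≤ (p : ℝ)⁻¹ := by
  simpa using padic_norm_lt_zpow_neg_iff_le_inv_pow (x := x) (m := 0)

end Padic

/-- if two p-adic numbers, whose Browkin algorithms do not terminate
before step `n`, have the same first `n+1` partial quotients, then
`|α − β|_p < p^(−2n)`. -/
theorem browkin_same_convergent_close
    (p : ℕ) [Fact p.Prime] (hp : Odd p) (n : ℕ)
    (α β : ℚ_[p]) (αs βs : ℕ → ℚ_[p]) (a b : ℕ → ℚ)
    (hα0 : αs 0 = α) (hβ0 : βs 0 = β)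
    (hαdig : ∀ j ≤ n, IsBrowkinDigit p (a j) ∧ ‖αs j - (a j : ℚ_[p])‖ < 1)
    (hβdig : ∀ j ≤ n, IsBrowkinDigit p (b j) ∧ ‖βs j - (b j : ℚ_[p])‖ < 1)
    (hαstep : ∀ j < n, αs j ≠ (a j : ℚ_[p]) ∧ αs (j + 1) = (αs j - (a j : ℚ_[p]))⁻¹)
    (hβstep : ∀ j < n, βs j ≠ (b j : ℚ_[p]) ∧ βs (j + 1) = (βs j - (b j : ℚ_[p]))⁻¹)
    (heq : ∀ j ≤ n, a j = b j) :
    ‖α - β‖ < (p : ℝ) ^ (-(2 * n : ℤ)) := by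
  subst hα0 hβ0
  exact mod_cast padic_norm_lt_zpow_neg_iff_le_inv_pow.2 <|
    browkin_same_convergent_close_general (a := fun j ↦ (a j : ℚ_[p]))
      (fun j hj ↦ padic_norm_lt_one_iff_le_inv.1 (hαdig j hj).2)
      (fun j hj ↦ padic_norm_lt_one_iff_le_inv.1 (heq j hj ▸ (hβdig j hj).2))
      hαstep (fun j hj ↦ heq j hj.le ▸ hβstep j hj)
end

section
/- Let p be an odd prime and α ∈ ℚ_p a quadratic irrational with conjugate α^c, BCF complete quotients (α_n) and conjugate complete quotients (α_n^c). Assume v_p(α) < 0 and v_p(α^c) > 0. Then for every n ≥ 0 one has v_p(α_n) < 0 and v_p(α_n^c) > 0; moreover v_p(α_{n+1}^c) = −v_p(α_n). -/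
/-!
Since `α_n - a_n` has positive valuation, so has `α_n^c + (α_n - a_n) = (α_n^c - a_n) + α_n`
whenever `α_n^c` does. If moreover `v_p(α_n) < 0`, the two summands on the right must cancel to
leading order, so `v_p(α_n^c - a_n) = v_p(α_n)`. Inverting `α_n - a_n` and `α_n^c - a_n` then
carries both sign conditions to the index `n + 1`.
-/

theorem norm_sub_eq_of_norm_lt {E : Type*} [SeminormedAddCommGroup E] [IsUltrametricDist E]
    {x y a : E} (hy : ‖y‖ < ‖x‖) (ha : ‖x - a‖ < ‖x‖) : ‖y - a‖ = ‖x‖ := by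
  refine IsUltrametricDist.norm_eq_of_add_norm_lt_max ?_
  calc ‖y - a + x‖ = ‖y + (x - a)‖ := by rw [sub_add_eq_add_sub, add_sub_assoc]
    _ ≤ max ‖y‖ ‖x - a‖ := IsUltrametricDist.norm_add_le_max _ _
    _ < ‖x‖ := max_lt hy ha
    _ ≤ max ‖y - a‖ ‖x‖ := le_max_right _ _

theorem completeQuotient_notMem_subfield {K : Type*} [DivisionRing K] (F : Subfield K)
    {x a : ℕ → K} (ha : ∀ n, a n ∈ F) (hstep : ∀ n, x (n + 1) = (x n - a n)⁻¹)
    (h0 : x 0 ∉ F) (n : ℕ) : x n ∉ F := by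
  induction n with
  | zero => exact h0
  | succ n ih => rwa [hstep, inv_mem_iff, sub_eq_add_neg, add_mem_cancel_right (neg_mem (ha n))]

section Padic

variable {p : ℕ} [Fact p.Prime]

theorem IsBCF.ne_ratCast {x : ℕ → ℚ_[p]} {a : ℕ → ℚ} (h : IsBCF p x a)
    (h0 : ∀ q : ℚ, x 0 ≠ q) (n : ℕ) (q : ℚ) : x n ≠ q := by
  let F : Subfield ℚ_[p] := (algebraMap ℚ ℚ_[p]).fieldRange
  have hx0 : x 0 ∉ F := fun ⟨r, hr⟩ ↦ h0 r hr.symm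
  have hxn : x n ∉ F :=
    completeQuotient_notMem_subfield F (fun k ↦ ⟨a k, rfl⟩) (fun k ↦ (h k).2.2) hx0 n
  exact fun hq ↦ hxn ⟨q, hq.symm⟩

theorem padic_valuation_neg_iff_one_lt_norm {x : ℚ_[p]} : x.valuation < 0 ↔ 1 < ‖x‖ := by
  rw [← not_le, ← not_le, Padic.norm_le_one_iff_val_nonneg]

theorem padic_valuation_pos_iff_norm_lt_one {x : ℚ_[p]} :
    0 < x.valuation ↔ x ≠ 0 ∧ ‖x‖ < 1 := by
  rw [← neg_lt_zero, ← Padic.valuation_inv, padic_valuation_neg_iff_one_lt_norm, norm_inv,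
    one_lt_inv_iff₀, norm_pos_iff]

theorem padic_valuation_eq_of_norm_eq {x y : ℚ_[p]} (h : ‖x‖ = ‖y‖) :
    x.valuation = y.valuation := by
  obtain rfl | hx := eq_or_ne x 0
  · rw [norm_zero, eq_comm, norm_eq_zero] at h
    rw [h]
  have hy : y ≠ 0 := norm_ne_zero_iff.1 (h ▸ norm_ne_zero_iff.2 hx)
  have hp : (1 : ℝ) < p := mod_cast (Fact.out : p.Prime).one_lt
  rw [Padic.norm_eq_zpow_neg_valuation hx, Padic.norm_eq_zpow_neg_valuation hy] at h
  exact neg_injective ((zpow_right_strictMono₀ hp).injective h)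

theorem padic_valuation_sub_eq_of_neg_of_pos {x y a : ℚ_[p]} (hx : x.valuation < 0)
    (hy : 0 < y.valuation) (ha : ‖x - a‖ < 1) : (y - a).valuation = x.valuation := by
  have hx' : 1 < ‖x‖ := padic_valuation_neg_iff_one_lt_norm.1 hx
  have hy' : ‖y‖ < 1 := (padic_valuation_pos_iff_norm_lt_one.1 hy).2
  exact padic_valuation_eq_of_norm_eq (norm_sub_eq_of_norm_lt (hy'.trans hx') (ha.trans hx'))

theorem browkin_regular_propagates_general {x y a : ℕ → ℚ_[p]} (hne : ∀ n, x n ≠ a n)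
    (ha : ∀ n, ‖x n - a n‖ < 1) (hx : ∀ n, x (n + 1) = (x n - a n)⁻¹)
    (hy : ∀ n, y (n + 1) = (y n - a n)⁻¹) (hx0 : (x 0).valuation < 0)
    (hy0 : 0 < (y 0).valuation) (n : ℕ) :
    (x n).valuation < 0 ∧ 0 < (y n).valuation ∧ (y (n + 1)).valuation = -(x n).valuation := by
  have valuation_y_succ (k : ℕ) (hxk : (x k).valuation < 0) (hyk : 0 < (y k).valuation) :
      (y (k + 1)).valuation = -(x k).valuation := by
    rw [hy, Padic.valuation_inv, padic_valuation_sub_eq_of_neg_of_pos hxk hyk (ha k)]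
  induction n with
  | zero => exact ⟨hx0, hy0, valuation_y_succ 0 hx0 hy0⟩
  | succ n ih =>
    obtain ⟨hxn, -, hyn⟩ := ih
    have hx_succ : (x (n + 1)).valuation < 0 := by
      rw [hx, Padic.valuation_inv, neg_lt_zero]
      exact padic_valuation_pos_iff_norm_lt_one.2 ⟨sub_ne_zero.2 (hne n), ha n⟩
    have hy_succ : 0 < (y (n + 1)).valuation := by rwa [hyn, neg_pos]
    exact ⟨hx_succ, hy_succ, valuation_y_succ (n + 1) hx_succ hy_succ⟩

end Padic

/-- if `v_p(α) < 0` and `v_p(α^c) > 0`, then for every `n ≥ 0` one has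
`v_p(α_n) < 0` and `v_p(α_n^c) > 0`; moreover `v_p(α_{n+1}^c) = −v_p(α_n)`. -/
theorem browkin_regular_propagates
    (p : ℕ) [Fact p.Prime] (hp : Odd p)
    (α : ℚ_[p]) (hirr : ∀ q : ℚ, α ≠ (q : ℚ_[p]))
    (tr nm : ℚ) (hquad : α ^ 2 - (tr : ℚ_[p]) * α + (nm : ℚ_[p]) = 0)
    (αc : ℚ_[p]) (hαc : αc = (tr : ℚ_[p]) - α)
    (αs : ℕ → ℚ_[p]) (a : ℕ → ℚ) (hα0 : αs 0 = α) (hbcf : IsBCF p αs a)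
    (αcs : ℕ → ℚ_[p]) (hαc0 : αcs 0 = αc)
    (hαcstep : ∀ n, αcs (n + 1) = (αcs n - (a n : ℚ_[p]))⁻¹)
    (hv : α.valuation < 0) (hvc : 0 < αc.valuation) :
    ∀ n : ℕ, (αs n).valuation < 0 ∧ 0 < (αcs n).valuation ∧
      (αcs (n + 1)).valuation = -(αs n).valuation := by
  subst hα0 hαc0
  exact browkin_regular_propagates_general (fun n ↦ hbcf.ne_ratCast hirr n (a n))
    (fun n ↦ (hbcf n).2.1) (fun n ↦ (hbcf n).2.2) hαcstep hv hvc
end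

section
/- Let p be an odd prime and α ∈ ℚ_p a quadratic irrational with conjugate α^c, BCF partial quotients (a_n), complete quotients (α_n) and conjugate complete quotients (α_n^c). Assume v_p(α) < 0 and v_p(α^c) > 0, and set β_n = −1/α_n^c. Then for every n ≥ 0 one has β_{n+1} = a_n + 1/β_n, and a_n is the Browkin digit of β_{n+1}, i.e., s(β_{n+1}) = a_n (equivalently |β_{n+1} − a_n|_p < 1). Consequently −1/α_{n+1}^c = [a_n, a_{n−1}, …, a_0, −1/α^c] as a finite continued fraction. -/
/-!
The conjugate recursion `α^c_{n+1} = 1/(α^c_n − a_n)` solved for `α^c_n` and rewritten in terms of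
`β_n = −1/α^c_n` is the recursion `β_{n+1} = a_n + 1/β_n`, which runs through the partial quotients
in reverse order. A non-terminating expansion of some `α` with `|α| > 1` has all `|α_n| > 1`, hence
all `|a_n| > 1`. By the ultrametric inequality the reversed recursion then preserves `|β_n| > 1`,
so the error `β_{n+1} − a_n = 1/β_n` always has absolute value less than `1`.
-/

/-- The recursion of (conjugate) complete quotients: `x` arises from `x 0` by repeatedly subtracting
the partial quotient and inverting. The partial quotients `a` are arbitrary, so that the same notion
covers `α_n`, whose digits are the `a n`, and `α_n^c`, on which these digits are imposed. -/
def IsCompleteQuotientSeq {K : Type*} [DivisionRing K] (a x : ℕ → K) : Prop :=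
  ∀ n, x (n + 1) = (x n - a n)⁻¹

namespace IsCompleteQuotientSeq

section DivisionRing

variable {K : Type*} [DivisionRing K] {a x : ℕ → K}

theorem neg_inv_succ (hx : IsCompleteQuotientSeq a x) (n : ℕ) :
    -(x (n + 1))⁻¹ = a n + (-(x n)⁻¹)⁻¹ := by
  rw [hx n, inv_inv, inv_neg, inv_inv, neg_sub, sub_eq_add_neg]

theorem notMem_subfield (hx : IsCompleteQuotientSeq a x) {F : Subfield K} (ha : ∀ n, a n ∈ F)
    (h₀ : x 0 ∉ F) (n : ℕ) : x n ∉ F := by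
  induction n with
  | zero => exact h₀
  | succ n ih =>
    rw [hx n, inv_mem_iff]
    exact fun hmem ↦ ih (sub_add_cancel (x n) (a n) ▸ add_mem hmem (ha n))

end DivisionRing

section NormedDivisionRing

variable {K : Type*} [NormedDivisionRing K] {a x : ℕ → K}

theorem one_lt_norm (hx : IsCompleteQuotientSeq a x) (hlt : ∀ n, ‖x n - a n‖ < 1)
    (hne : ∀ n, x n ≠ a n) (h₀ : 1 < ‖x 0‖) : ∀ n, 1 < ‖x n‖
  | 0 => h₀
  | n + 1 => by
    rw [hx n, norm_inv, one_lt_inv_iff₀]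
    exact ⟨norm_sub_pos_iff.mpr (hne n), hlt n⟩

theorem one_lt_norm_partialQuotient [IsUltrametricDist K] (hx : IsCompleteQuotientSeq a x)
    (hlt : ∀ n, ‖x n - a n‖ < 1) (hne : ∀ n, x n ≠ a n) (h₀ : 1 < ‖x 0‖) (n : ℕ) :
    1 < ‖a n‖ := by
  have hxn : 1 < ‖x n‖ := hx.one_lt_norm hlt hne h₀ n
  have hnorm : ‖x n‖ = ‖-a n‖ := by
    apply IsUltrametricDist.norm_eq_of_add_norm_lt_max
    rw [← sub_eq_add_neg]
    exact (hlt n).trans (lt_max_of_lt_left hxn)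
  rwa [hnorm, norm_neg] at hxn

end NormedDivisionRing

end IsCompleteQuotientSeq

theorem one_lt_norm_of_eq_add_inv {K : Type*} [NormedDivisionRing K] [IsUltrametricDist K]
    {a b : ℕ → K} (hb : ∀ n, b (n + 1) = a n + (b n)⁻¹) (ha : ∀ n, 1 < ‖a n‖)
    (h₀ : 1 < ‖b 0‖) (n : ℕ) : 1 < ‖b n‖ := by
  induction n with
  | zero => exact h₀
  | succ n ih =>
    have hinv : ‖(b n)⁻¹‖ < ‖a n‖ := by
      rw [norm_inv]
      exact (inv_lt_one_of_one_lt₀ ih).trans (ha n)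
    rw [hb n, IsUltrametricDist.norm_add_eq_max_of_norm_ne_norm hinv.ne', max_eq_left hinv.le]
    exact ha n

theorem browkin_conjugate_reversed_digits_general {K : Type*} [NormedDivisionRing K]
    [IsUltrametricDist K] {a αs αcs βs : ℕ → K} (hα : IsCompleteQuotientSeq a αs)
    (hlt : ∀ n, ‖αs n - a n‖ < 1) (hne : ∀ n, αs n ≠ a n) (hα₀ : 1 < ‖αs 0‖)
    (hαc : IsCompleteQuotientSeq a αcs) (hβ : ∀ n, βs n = -(αcs n)⁻¹) (hβ₀ : 1 < ‖βs 0‖)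
    (n : ℕ) : βs (n + 1) = a n + (βs n)⁻¹ ∧ ‖βs (n + 1) - a n‖ < 1 := by
  have hrec : ∀ m, βs (m + 1) = a m + (βs m)⁻¹ := fun m ↦ by
    simpa only [hβ] using hαc.neg_inv_succ m
  have hβn : 1 < ‖βs n‖ :=
    one_lt_norm_of_eq_add_inv hrec (hα.one_lt_norm_partialQuotient hlt hne hα₀) hβ₀ n
  refine ⟨hrec n, ?_⟩
  rw [hrec n, add_sub_cancel_left, norm_inv]
  exact inv_lt_one_of_one_lt₀ hβn

section Padic

variable {p : ℕ} [Fact p.Prime]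

theorem padic_one_lt_norm_iff_valuation_neg {x : ℚ_[p]} : 1 < ‖x‖ ↔ x.valuation < 0 := by
  rw [← not_le, Padic.norm_le_one_iff_val_nonneg, not_le]

theorem IsBCF.isCompleteQuotientSeq {αs : ℕ → ℚ_[p]} {a : ℕ → ℚ} (h : IsBCF p αs a) :
    IsCompleteQuotientSeq (fun n ↦ (a n : ℚ_[p])) αs :=
  fun n ↦ (h n).2.2

theorem IsBCF.ne_partialQuotient {αs : ℕ → ℚ_[p]} {a : ℕ → ℚ} (h : IsBCF p αs a)
    (hirr : ∀ q : ℚ, αs 0 ≠ (q : ℚ_[p])) (n : ℕ) : αs n ≠ (a n : ℚ_[p]) := by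
  let F : Subfield ℚ_[p] := (Rat.castHom ℚ_[p]).fieldRange
  have ha : ∀ m, (a m : ℚ_[p]) ∈ F := fun m ↦ ⟨a m, rfl⟩
  have h₀ : αs 0 ∉ F := fun ⟨q, hq⟩ ↦ hirr q hq.symm
  exact fun heq ↦ h.isCompleteQuotientSeq.notMem_subfield ha h₀ n (heq ▸ ha n)

end Padic

/-- if `v_p(α) < 0` and `v_p(α^c) > 0`, then setting
`β_n = −1/α_n^c` one has `β_{n+1} = a_n + 1/β_n`, and `a_n` is the Browkin digit
of `β_{n+1}` (`a_n ∈ 𝒴` holds by hypothesis, and `|β_{n+1} − a_n|_p < 1`); hence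
`−1/α_{n+1}^c = [a_n, a_{n−1}, …, a_0, −1/α^c]` as a finite continued fraction. -/
theorem browkin_conjugate_reversed_digits
    (p : ℕ) [Fact p.Prime] (hp : Odd p)
    (α : ℚ_[p]) (hirr : ∀ q : ℚ, α ≠ (q : ℚ_[p]))
    (tr nm : ℚ) (hquad : α ^ 2 - (tr : ℚ_[p]) * α + (nm : ℚ_[p]) = 0)
    (αc : ℚ_[p]) (hαc : αc = (tr : ℚ_[p]) - α)
    (αs : ℕ → ℚ_[p]) (a : ℕ → ℚ) (hα0 : αs 0 = α) (hbcf : IsBCF p αs a)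
    (αcs : ℕ → ℚ_[p]) (hαc0 : αcs 0 = αc)
    (hαcstep : ∀ n, αcs (n + 1) = (αcs n - (a n : ℚ_[p]))⁻¹)
    (hv : α.valuation < 0) (hvc : 0 < αc.valuation)
    (βs : ℕ → ℚ_[p]) (hβ : ∀ n, βs n = -(αcs n)⁻¹) :
    ∀ n : ℕ, βs (n + 1) = (a n : ℚ_[p]) + (βs n)⁻¹ ∧
      ‖βs (n + 1) - (a n : ℚ_[p])‖ < 1 := by
  have hα₀ : 1 < ‖αs 0‖ := by rwa [hα0, padic_one_lt_norm_iff_valuation_neg]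
  have hβ₀ : 1 < ‖βs 0‖ := by
    rwa [hβ, norm_neg, hαc0, padic_one_lt_norm_iff_valuation_neg, Padic.valuation_inv, neg_lt_zero]
  exact browkin_conjugate_reversed_digits_general hbcf.isCompleteQuotientSeq
    (fun n ↦ (hbcf n).2.1) (hbcf.ne_partialQuotient (hα0 ▸ hirr)) hα₀ hαcstep hβ hβ₀
end

section
/- Let p be an odd prime and α ∈ ℚ_p a quadratic irrational with conjugate α^c, BCF complete quotients (α_j) and conjugate complete quotients (α_j^c). If |α − α^c|_p ≥ p^{−2n} for some n ≥ 0, then α_{n+2} is regular: v_p(α_{n+2}) < 0 and v_p(α_{n+2}^c) > 0. -/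
/-!
Expand `x` and `y` along the same partial quotients `a`, where `‖x k - a k‖ ≤ ρ < 1`. As soon as
`x` is better approximated than `y` at some step, `y (k + 1)` is too small to influence the next
partial quotient, so the pair is regular from step `k + 2` on. As long as this does not happen,
`‖x k - y k‖` grows by a factor of at least `ρ⁻²` at every step, since
`x (k + 1) - y (k + 1) = x (k + 1) * (y k - x k) * y (k + 1)`. Once `‖x k - y k‖ ≥ 1`, the
ultrametric inequality forbids `y` from being approximated as well as `x`.
-/

/-- `x` is the sequence of complete quotients of a non-terminating continued fraction expansion
with partial quotients `a`. No condition is put on the choice of `a`, so that an element and its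
conjugate can be expanded along the same partial quotients. -/
structure IsCompleteQuotientSeq_s4 {K : Type*} [DivisionRing K] (x a : ℕ → K) : Prop where
  ne (k : ℕ) : x k ≠ a k
  succ (k : ℕ) : x (k + 1) = (x k - a k)⁻¹

/-- The regularity condition on a complete quotient `x` and its conjugate `y`, in terms of the
norm: for `K = ℚ_[p]` and `y ≠ 0` it says that `v_p(x) < 0 < v_p(y)`. -/
def IsRegularPair {K : Type*} [Norm K] (x y : K) : Prop :=
  1 < ‖x‖ ∧ ‖y‖ < 1

namespace IsCompleteQuotientSeq_s4

section DivisionRing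

variable {K : Type*} [DivisionRing K] {x y a : ℕ → K}

theorem of_notMem_subfield (F : Subfield K) (ha : ∀ k, a k ∈ F) (hx₀ : x 0 ∉ F)
    (hsucc : ∀ k, x (k + 1) = (x k - a k)⁻¹) : IsCompleteQuotientSeq_s4 x a where
  ne k hk := by
    have hxF : ∀ j, x j ∉ F := by
      intro j
      induction j with
      | zero => exact hx₀
      | succ j ih => rwa [hsucc, inv_mem_iff, sub_eq_add_neg, add_mem_cancel_right (neg_mem (ha j))]
    exact hxF k (hk ▸ ha k)
  succ := hsucc

theorem of_ne_ratCast [CharZero K] {b : ℕ → ℚ} (hx₀ : ∀ q : ℚ, x 0 ≠ q)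
    (hsucc : ∀ k, x (k + 1) = (x k - b k)⁻¹) : IsCompleteQuotientSeq_s4 x (fun k ↦ (b k : K)) :=
  of_notMem_subfield (Rat.castHom K).fieldRange (fun k ↦ ⟨b k, rfl⟩)
    (fun ⟨q, hq⟩ ↦ hx₀ q hq.symm) hsucc

theorem tail (hx : IsCompleteQuotientSeq_s4 x a) :
    IsCompleteQuotientSeq_s4 (fun k ↦ x (k + 1)) (fun k ↦ a (k + 1)) :=
  ⟨fun k ↦ hx.ne (k + 1), fun k ↦ hx.succ (k + 1)⟩

theorem succ_ne_zero (hx : IsCompleteQuotientSeq_s4 x a) (k : ℕ) : x (k + 1) ≠ 0 := by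
  rw [hx.succ]
  exact inv_ne_zero (sub_ne_zero.2 (hx.ne k))

theorem succ_sub_succ (hx : IsCompleteQuotientSeq_s4 x a) (hy : IsCompleteQuotientSeq_s4 y a)
    (k : ℕ) : x (k + 1) - y (k + 1) = x (k + 1) * (y k - x k) * y (k + 1) := by
  rw [hx.succ, hy.succ, inv_sub_inv' (sub_ne_zero.2 (hx.ne k)) (sub_ne_zero.2 (hy.ne k)),
    sub_sub_sub_cancel_right]

end DivisionRing

section NormedDivisionRing

variable {K : Type*} [NormedDivisionRing K] {x y a : ℕ → K} {ρ : ℝ}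

theorem one_lt_norm_succ (hx : IsCompleteQuotientSeq_s4 x a) {k : ℕ} (hxa : ‖x k - a k‖ < 1) :
    1 < ‖x (k + 1)‖ := by
  rw [hx.succ, norm_inv]
  exact (one_lt_inv₀ (norm_sub_pos_iff.2 (hx.ne k))).2 hxa

theorem norm_succ_lt_norm_succ_iff (hx : IsCompleteQuotientSeq_s4 x a)
    (hy : IsCompleteQuotientSeq_s4 y a) {k : ℕ} :
    ‖y (k + 1)‖ < ‖x (k + 1)‖ ↔ ‖x k - a k‖ < ‖y k - a k‖ := by
  rw [hx.succ, hy.succ, norm_inv, norm_inv,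
    inv_lt_inv₀ (norm_sub_pos_iff.2 (hy.ne k)) (norm_sub_pos_iff.2 (hx.ne k))]

theorem norm_sub_le_sq_mul_norm_succ_sub_succ (hx : IsCompleteQuotientSeq_s4 x a)
    (hy : IsCompleteQuotientSeq_s4 y a) {k : ℕ} (hxa : ‖x k - a k‖ ≤ ρ) (hya : ‖y k - a k‖ ≤ ρ) :
    ‖x k - y k‖ ≤ ρ ^ 2 * ‖x (k + 1) - y (k + 1)‖ := by
  have hu : 0 < ‖x k - a k‖ := norm_sub_pos_iff.2 (hx.ne k)
  have hv : 0 < ‖y k - a k‖ := norm_sub_pos_iff.2 (hy.ne k)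
  have hnorm : ‖x (k + 1) - y (k + 1)‖ = ‖x k - a k‖⁻¹ * ‖x k - y k‖ * ‖y k - a k‖⁻¹ := by
    rw [hx.succ_sub_succ hy, norm_mul, norm_mul, hx.succ, hy.succ, norm_inv, norm_inv,
      norm_sub_rev (y k)]
  calc ‖x k - y k‖ = ‖x k - a k‖ * ‖y k - a k‖ * ‖x (k + 1) - y (k + 1)‖ := by
        rw [hnorm]; field_simp
    _ ≤ ρ * ρ * ‖x (k + 1) - y (k + 1)‖ := by gcongr; exact hu.le.trans hxa
    _ = ρ ^ 2 * ‖x (k + 1) - y (k + 1)‖ := by rw [sq]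

variable [IsUltrametricDist K]

theorem isRegularPair_succ (hx : IsCompleteQuotientSeq_s4 x a) (hy : IsCompleteQuotientSeq_s4 y a)
    {k : ℕ} (hxa : ‖x k - a k‖ < 1) (hx₁ : 1 < ‖x k‖) (hyx : ‖y k‖ < ‖x k‖) :
    IsRegularPair (x (k + 1)) (y (k + 1)) := by
  have hmax : ‖x k‖ ≤ max ‖x k - a k‖ (max ‖y k - a k‖ ‖y k‖) := by
    simpa only [dist_eq_norm, sub_zero, norm_sub_rev (a k)] using
      (dist_triangle_max (x k) (a k) 0).trans (max_le_max_left _ (dist_triangle_max (a k) (y k) 0))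
  have hle : ‖x k‖ ≤ ‖y k - a k‖ := by
    simpa only [le_max_iff, (hxa.trans hx₁).not_ge, hyx.not_ge, false_or, or_false] using hmax
  refine ⟨hx.one_lt_norm_succ hxa, ?_⟩
  rw [hy.succ, norm_inv]
  exact inv_lt_one_of_one_lt₀ (hx₁.trans_le hle)

theorem isRegularPair_of_le (hx : IsCompleteQuotientSeq_s4 x a) (hy : IsCompleteQuotientSeq_s4 y a)
    (hxa : ∀ k, ‖x k - a k‖ < 1) {k m : ℕ} (hkm : k ≤ m) (hk : IsRegularPair (x k) (y k)) :
    IsRegularPair (x m) (y m) := by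
  induction m, hkm using Nat.le_induction with
  | base => exact hk
  | succ m _ ih => exact hx.isRegularPair_succ hy (hxa m) ih.1 (ih.2.trans ih.1)

theorem isRegularPair_add_two_of_norm_sub_lt (hx : IsCompleteQuotientSeq_s4 x a)
    (hy : IsCompleteQuotientSeq_s4 y a) (hxa : ∀ k, ‖x k - a k‖ < 1) {k : ℕ}
    (hk : ‖x k - a k‖ < ‖y k - a k‖) : IsRegularPair (x (k + 2)) (y (k + 2)) :=
  hx.isRegularPair_succ hy (hxa (k + 1)) (hx.one_lt_norm_succ (hxa k))
    ((hx.norm_succ_lt_norm_succ_iff hy).2 hk)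

theorem isRegularPair_add_two (hx : IsCompleteQuotientSeq_s4 x a) (hy : IsCompleteQuotientSeq_s4 y a)
    (hρ : ρ < 1) (hxa : ∀ k, ‖x k - a k‖ ≤ ρ) {n : ℕ} (hfar : ρ ^ (2 * n) ≤ ‖x 0 - y 0‖) :
    IsRegularPair (x (n + 2)) (y (n + 2)) := by
  have hxa₁ (k : ℕ) : ‖x k - a k‖ < 1 := (hxa k).trans_lt hρ
  induction n generalizing x y a with
  | zero =>
    refine hx.isRegularPair_add_two_of_norm_sub_lt hy hxa₁ ((hxa₁ 0).trans_le ?_)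
    have hone : 1 ≤ ‖x 0 - y 0‖ := by simpa only [mul_zero, pow_zero] using hfar
    have hmax : ‖x 0 - y 0‖ ≤ max ‖x 0 - a 0‖ ‖y 0 - a 0‖ := by
      simpa only [dist_eq_norm, norm_sub_rev (a 0)] using dist_triangle_max (x 0) (a 0) (y 0)
    exact (le_max_iff.1 (hone.trans hmax)).resolve_left (hxa₁ 0).not_ge
  | succ n ih =>
    obtain hlt | hge := lt_or_ge ‖x 0 - a 0‖ ‖y 0 - a 0‖
    · exact hx.isRegularPair_of_le hy hxa₁ (Nat.le_add_left 2 (n + 1))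
        (hx.isRegularPair_add_two_of_norm_sub_lt hy hxa₁ hlt)
    · have hρ₀ : 0 < ρ := (norm_sub_pos_iff.2 (hx.ne 0)).trans_le (hxa 0)
      have hgrow : ρ ^ 2 * ρ ^ (2 * n) ≤ ρ ^ 2 * ‖x 1 - y 1‖ := calc
        ρ ^ 2 * ρ ^ (2 * n) = ρ ^ (2 * (n + 1)) := by ring
        _ ≤ ‖x 0 - y 0‖ := hfar
        _ ≤ ρ ^ 2 * ‖x 1 - y 1‖ :=
          hx.norm_sub_le_sq_mul_norm_succ_sub_succ hy (hxa 0) (hge.trans (hxa 0))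
      exact ih hx.tail hy.tail (fun k ↦ hxa (k + 1)) (le_of_mul_le_mul_left hgrow (pow_pos hρ₀ 2))
        fun k ↦ hxa₁ (k + 1)

end NormedDivisionRing

end IsCompleteQuotientSeq_s4

section Padic

variable {p : ℕ} [Fact p.Prime]

theorem IsRegularPair.valuation_neg_and_valuation_pos {x y : ℚ_[p]} (h : IsRegularPair x y)
    (hy : y ≠ 0) : x.valuation < 0 ∧ 0 < y.valuation := by
  have hinv : 1 < ‖y⁻¹‖ := by
    rw [norm_inv]
    exact (one_lt_inv₀ (norm_pos_iff.2 hy)).2 h.2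
  rw [padic_one_lt_norm_iff_valuation_neg, Padic.valuation_inv, neg_lt_zero] at hinv
  exact ⟨padic_one_lt_norm_iff_valuation_neg.1 h.1, hinv⟩

theorem padic_norm_le_inv_of_lt_one {x : ℚ_[p]} (hx : ‖x‖ < 1) : ‖x‖ ≤ (p : ℝ)⁻¹ := by
  simpa only [zpow_neg_one] using
    (Padic.norm_le_pow_iff_norm_lt_pow_add_one x (-1)).2 (by simpa using hx)

theorem browkin_eventually_regular_general {x y a : ℕ → ℚ_[p]}
    (hx : IsCompleteQuotientSeq_s4 x a) (hy : IsCompleteQuotientSeq_s4 y a)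
    (hxa : ∀ k, ‖x k - a k‖ < 1) {n : ℕ} (hfar : (p : ℝ) ^ (-(2 * n : ℤ)) ≤ ‖x 0 - y 0‖) :
    (x (n + 2)).valuation < 0 ∧ 0 < (y (n + 2)).valuation := by
  have hρ : (p : ℝ)⁻¹ < 1 :=
    inv_lt_one_of_one_lt₀ (Nat.one_lt_cast.2 (Fact.out : p.Prime).one_lt)
  have hpow : (p : ℝ)⁻¹ ^ (2 * n) = (p : ℝ) ^ (-(2 * n : ℤ)) := by
    rw [inv_pow, zpow_neg, ← zpow_natCast, Nat.cast_mul, Nat.cast_ofNat]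
  exact (hx.isRegularPair_add_two hy hρ (fun k ↦ padic_norm_le_inv_of_lt_one (hxa k))
    (hpow.trans_le hfar)).valuation_neg_and_valuation_pos (hy.succ_ne_zero (n + 1))

end Padic

/-- if `|α − α^c|_p ≥ p^(−2n)`, then the complete quotient
`α_{n+2}` is regular: `v_p(α_{n+2}) < 0` and `v_p(α_{n+2}^c) > 0`. -/
theorem browkin_eventually_regular
    (p : ℕ) [Fact p.Prime] (hp : Odd p)
    (α : ℚ_[p]) (hirr : ∀ q : ℚ, α ≠ (q : ℚ_[p]))
    (tr nm : ℚ) (hquad : α ^ 2 - (tr : ℚ_[p]) * α + (nm : ℚ_[p]) = 0)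
    (αc : ℚ_[p]) (hαc : αc = (tr : ℚ_[p]) - α)
    (αs : ℕ → ℚ_[p]) (a : ℕ → ℚ) (hα0 : αs 0 = α) (hbcf : IsBCF p αs a)
    (αcs : ℕ → ℚ_[p]) (hαc0 : αcs 0 = αc)
    (hαcstep : ∀ n, αcs (n + 1) = (αcs n - (a n : ℚ_[p]))⁻¹)
    (n : ℕ) (hfar : (p : ℝ) ^ (-(2 * n : ℤ)) ≤ ‖α - αc‖) :
    (αs (n + 2)).valuation < 0 ∧ 0 < (αcs (n + 2)).valuation := by
  subst hα0 hαc
  have hirrc : ∀ q : ℚ, αcs 0 ≠ q := fun q hq ↦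
    hirr (tr - q) (by rw [Rat.cast_sub, ← hq, hαc0, sub_sub_cancel])
  exact browkin_eventually_regular_general (.of_ne_ratCast hirr fun k ↦ (hbcf k).2.2)
    (.of_ne_ratCast hirrc hαcstep) (fun k ↦ (hbcf k).2.1) (hαc0 ▸ hfar)
end

section
/- Let p be an odd prime and α ∈ ℚ_p a quadratic irrational with conjugate α^c whose BCF expansion is purely periodic of period N: α_N = α, with partial quotients a_0, …, a_{N−1} repeating. Then α is regular (v_p(α) < 0 and v_p(α^c) > 0), and the BCF expansion of β = −1/α^c is purely periodic with the reversed period: writing (β_j) for the BCF complete quotients of β, one has β_N = β and s(β_j) = a_{N−1−j} for 0 ≤ j ≤ N−1. -/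
/-!
Write `x n`, `y n` for the complete quotients of `α` and `αᶜ` with respect to the partial quotients
`a n` of `α`. They stay conjugate, so `y` returns to its starting point together with `x`. If every
`y n` in a period were congruent to `a n`, inverting the two small numbers `x n - a n` and
`y n - a n` would strictly increase `‖x n - y n‖` at each step, contradicting periodicity. So some
`y (n + 1)` is integral; as `1 < ‖a n‖`, all later ones have norm less than `1`, and by periodicity
so has every `y n`. Finally `-(y (n + 1))⁻¹ = a n - y n`, so reading the recursion for `y`
backwards gives the expansion of `-(y 0)⁻¹`, with the partial quotients `a n` in reverse order.
-/

section QuadraticConjugates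

variable {K : Type*} [Field K] {F : Subfield K} {x y z a : K}

/-- `x` and `y` are the two roots of a quadratic polynomial over the subfield `F`, and `x` does not
lie in `F`. The case `x = y` of an inseparable polynomial is allowed. -/
structure IsQuadraticConj (F : Subfield K) (x y : K) : Prop where
  notMem : x ∉ F
  add_mem : x + y ∈ F
  mul_mem : x * y ∈ F

namespace IsQuadraticConj

theorem of_quadratic {k : Type*} [Field k] [Algebra k K] {t n : k}
    (hx : ∀ q : k, x ≠ algebraMap k K q)
    (h : x ^ 2 - algebraMap k K t * x + algebraMap k K n = 0) :
    IsQuadraticConj (algebraMap k K).fieldRange x (algebraMap k K t - x) where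
  notMem := fun ⟨q, hq⟩ ↦ hx q hq.symm
  add_mem := ⟨t, by ring⟩
  mul_mem := ⟨n, by linear_combination h⟩

theorem symm (h : IsQuadraticConj F x y) : IsQuadraticConj F y x where
  notMem hy := h.notMem <| by simpa using F.sub_mem h.add_mem hy
  add_mem := add_comm x y ▸ h.add_mem
  mul_mem := mul_comm x y ▸ h.mul_mem

theorem ne_of_mem (h : IsQuadraticConj F x y) (ha : a ∈ F) : x ≠ a :=
  fun hxa ↦ h.notMem (hxa ▸ ha)

theorem ne [NeZero (2 : K)] (h : IsQuadraticConj F x y) : x ≠ y := by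
  rintro rfl
  have hx : (x + x) / 2 ∈ F := div_mem h.add_mem (ofNat_mem F 2)
  exact h.notMem (by rwa [add_self_div_two] at hx)

theorem sub_mem (h : IsQuadraticConj F x y) (ha : a ∈ F) : IsQuadraticConj F (x - a) (y - a) where
  notMem hx := h.notMem <| by simpa using F.add_mem hx ha
  add_mem := by
    rw [show x - a + (y - a) = x + y - (a + a) by ring]
    exact F.sub_mem h.add_mem (F.add_mem ha ha)
  mul_mem := by
    rw [show (x - a) * (y - a) = x * y - a * (x + y) + a * a by ring]
    exact F.add_mem (F.sub_mem h.mul_mem (F.mul_mem ha h.add_mem)) (F.mul_mem ha ha)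

theorem inv (h : IsQuadraticConj F x y) : IsQuadraticConj F x⁻¹ y⁻¹ where
  notMem hx := h.notMem <| by simpa using F.inv_mem hx
  add_mem := by
    have hx : x ≠ 0 := h.ne_of_mem F.zero_mem
    have hy : y ≠ 0 := h.symm.ne_of_mem F.zero_mem
    rw [inv_add_inv hx hy]
    exact F.div_mem h.add_mem h.mul_mem
  mul_mem := by
    rw [← mul_inv]
    exact F.inv_mem h.mul_mem

theorem right_unique (hy : IsQuadraticConj F x y) (hz : IsQuadraticConj F x z) : y = z := by
  by_contra hne
  have hsub : y - z ∈ F := by simpa using F.sub_mem hy.add_mem hz.add_mem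
  have hmul : x * (y - z) ∈ F := by simpa [mul_sub] using F.sub_mem hy.mul_mem hz.mul_mem
  have hx := F.div_mem hmul hsub
  rw [mul_div_cancel_right₀ x (sub_ne_zero.2 hne)] at hx
  exact hy.notMem hx

end IsQuadraticConj

end QuadraticConjugates

/-- The index `N - 1 - j` with `j` reduced modulo `N`: composing a sequence with `reflectMod N`
reverses its first `N` terms and repeats them periodically. -/
def reflectMod (N j : ℕ) : ℕ := N - 1 - j % N

theorem reflectMod_of_lt {N j : ℕ} (hj : j < N) : reflectMod N j = N - 1 - j := by
  rw [reflectMod, Nat.mod_eq_of_lt hj]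

theorem reflectMod_self (N : ℕ) : reflectMod N N = reflectMod N 0 := by
  rw [reflectMod, reflectMod, Nat.mod_self, Nat.zero_mod]

theorem apply_reflectMod_add_one {X : Type*} {f : ℕ → X} {N : ℕ} (hN : 0 < N) (hf : f N = f 0)
    (j : ℕ) : f (reflectMod N (j + 1) + 1) = f (reflectMod N j) := by
  have hj : j % N < N := Nat.mod_lt j hN
  unfold reflectMod
  rcases Nat.lt_or_ge (j % N + 1) N with hlt | hge
  · rw [← Nat.mod_add_mod, Nat.mod_eq_of_lt hlt]
    congr 1
    omega
  · have hlast : j % N + 1 = N := by omega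
    rw [← Nat.mod_add_mod, hlast, Nat.mod_self, Nat.sub_zero, Nat.sub_add_cancel hN, hf]
    congr 1
    omega

section Norm

variable {K : Type*} [NormedField K] {u v c : K}

theorem norm_sub_lt_norm_inv_sub_inv (hu0 : u ≠ 0) (hv0 : v ≠ 0) (huv : u ≠ v) (hu : ‖u‖ < 1)
    (hv : ‖v‖ < 1) : ‖u - v‖ < ‖u⁻¹ - v⁻¹‖ := by
  have hprod : ‖u‖ * ‖v‖ < 1 := mul_lt_one_of_nonneg_of_lt_one_left (norm_nonneg u) hu hv.le
  have hpos : 0 < ‖u‖ * ‖v‖ := mul_pos (norm_pos_iff.2 hu0) (norm_pos_iff.2 hv0)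
  rw [← dist_eq_norm, ← dist_eq_norm, dist_inv_inv₀ hu0 hv0, lt_div_iff₀ hpos]
  exact mul_lt_of_lt_one_right (dist_pos.2 huv) hprod

variable [IsUltrametricDist K]

theorem one_lt_norm_of_norm_sub_lt_one (hu : 1 < ‖u‖) (huc : ‖u - c‖ < 1) : 1 < ‖c‖ := by
  rw [sub_eq_add_neg] at huc
  rwa [IsUltrametricDist.norm_eq_of_add_norm_lt_max
    (huc.trans (hu.trans_le (le_max_left _ _))), norm_neg] at hu

theorem norm_inv_sub_lt_one (hu : ‖u‖ ≤ 1) (hc : 1 < ‖c‖) : ‖(u - c)⁻¹‖ < 1 := by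
  have hne : ‖u‖ ≠ ‖-c‖ := by
    rw [norm_neg]
    exact (hu.trans_lt hc).ne
  rw [norm_inv, sub_eq_add_neg, IsUltrametricDist.norm_add_eq_max_of_norm_ne_norm hne, norm_neg]
  exact inv_lt_one_of_one_lt₀ (hc.trans_le (le_max_right _ _))

end Norm

/-- `x` is a sequence of complete quotients for the partial quotients `a`. Nothing ties `a n` to
`x n` beyond the recursion, so the conjugate of a complete quotient sequence qualifies as well. -/
def IsCompleteQuotients {K : Type*} [Field K] (x a : ℕ → K) : Prop :=
  ∀ n, x (n + 1) = (x n - a n)⁻¹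

namespace IsCompleteQuotients

section Field

variable {K : Type*} [Field K] {F : Subfield K} {x y a : ℕ → K}

theorem isQuadraticConj (hx : IsCompleteQuotients x a) (hy : IsCompleteQuotients y a)
    (ha : ∀ n, a n ∈ F) (h0 : IsQuadraticConj F (x 0) (y 0)) (n : ℕ) :
    IsQuadraticConj F (x n) (y n) := by
  induction n with
  | zero => exact h0
  | succ n ih =>
    rw [hx n, hy n]
    exact (ih.sub_mem (ha n)).inv

theorem ne (hx : IsCompleteQuotients x a) (hy : IsCompleteQuotients y a) (h0 : x 0 ≠ y 0)
    (n : ℕ) : x n ≠ y n := by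
  induction n with
  | zero => exact h0
  | succ n ih =>
    rw [hx n, hy n]
    exact inv_injective.ne (sub_left_injective.ne ih)

theorem neg_inv_succ (hy : IsCompleteQuotients y a) (n : ℕ) : -(y (n + 1))⁻¹ = a n - y n := by
  rw [hy n, inv_inv, neg_sub]

theorem reverse (hy : IsCompleteQuotients y a) {N : ℕ} (hN : 0 < N) (hper : y N = y 0) :
    IsCompleteQuotients (fun j ↦ (a - y) (reflectMod N j)) (fun j ↦ a (reflectMod N j)) := by
  intro j
  simp only [Pi.sub_apply, sub_sub_cancel_left, inv_neg]
  rw [← hy.neg_inv_succ, apply_reflectMod_add_one hN hper]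

end Field

section NormedField

variable {K : Type*} [NormedField K] {x y a : ℕ → K}

theorem one_lt_norm_succ (hx : IsCompleteQuotients x a) {n : ℕ} (hne : x n ≠ a n)
    (hlt : ‖x n - a n‖ < 1) : 1 < ‖x (n + 1)‖ := by
  rw [hx n, norm_inv]
  exact (one_lt_inv₀ (norm_sub_pos_iff.2 hne)).2 hlt

theorem exists_norm_le_one (hx : IsCompleteQuotients x a) (hy : IsCompleteQuotients y a)
    (h0 : x 0 ≠ y 0) (hxa : ∀ n, x n ≠ a n) (hya : ∀ n, y n ≠ a n)
    (hlt : ∀ n, ‖x n - a n‖ < 1) {N : ℕ} (hN : 0 < N) (hxN : x N = x 0) (hyN : y N = y 0) :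
    ∃ n ≤ N, ‖y n‖ ≤ 1 := by
  by_contra! hlarge
  have hclose : ∀ n < N, ‖y n - a n‖ < 1 := by
    intro n hn
    have h := hlarge (n + 1) hn
    rwa [hy n, norm_inv, one_lt_inv₀ (norm_sub_pos_iff.2 (hya n))] at h
  have hgrow : ∀ n < N, ‖x n - y n‖ < ‖x (n + 1) - y (n + 1)‖ := by
    intro n hn
    have h := norm_sub_lt_norm_inv_sub_inv (sub_ne_zero.2 (hxa n)) (sub_ne_zero.2 (hya n))
      (sub_left_injective.ne (hx.ne hy h0 n)) (hlt n) (hclose n hn)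
    rwa [sub_sub_sub_cancel_right, ← hx n, ← hy n] at h
  have hmono : StrictMonoOn (fun n ↦ ‖x n - y n‖) (Set.Iic N) := strictMonoOn_Iic_of_lt_succ hgrow
  have h := hmono (Set.mem_Iic.2 hN.le) (Set.mem_Iic.2 le_rfl) hN
  simp only [hxN, hyN, lt_self_iff_false] at h

variable [IsUltrametricDist K]

theorem norm_lt_one_of_lt (hy : IsCompleteQuotients y a) (ha : ∀ n, 1 < ‖a n‖) {m n : ℕ}
    (hm : ‖y m‖ ≤ 1) (hmn : m < n) : ‖y n‖ < 1 := by
  have hstep : ∀ k, ‖y k‖ ≤ 1 → ‖y (k + 1)‖ < 1 := fun k hk ↦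
    hy k ▸ norm_inv_sub_lt_one hk (ha k)
  induction n, hmn using Nat.le_induction with
  | base => exact hstep m hm
  | succ n _ ih => exact hstep n ih.le

theorem norm_lt_one_of_periodic (hy : IsCompleteQuotients y a) (ha : ∀ n, 1 < ‖a n‖) {m N : ℕ}
    (hN : 0 < N) (hyN : y N = y 0) (hmN : m ≤ N) (hm : ‖y m‖ ≤ 1) (n : ℕ) : ‖y n‖ < 1 := by
  have hN_le : ‖y N‖ ≤ 1 := by
    rcases hmN.eq_or_lt with rfl | hlt
    · exact hm
    · exact (hy.norm_lt_one_of_lt ha hm hlt).le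
  have h0 : ‖y 0‖ < 1 := hyN ▸ hy.norm_lt_one_of_lt ha (hyN ▸ hN_le) hN
  rcases n.eq_zero_or_pos with rfl | hn
  · exact h0
  · exact hy.norm_lt_one_of_lt ha h0.le hn

end NormedField

end IsCompleteQuotients

section UltrametricExpansion

variable {k K : Type*} [Field k] [NormedField K] [Algebra k K] {D : Set k} {αs αcs : ℕ → K}
  {a : ℕ → k}

/-- `αs` and `a` are the complete and the partial quotients of a non-terminating continued fraction
in a normed field, whose partial quotients are taken from the digit set `D` and approximate the
complete quotients to within distance less than `1`. For the Browkin digits in `ℚ_[p]` this is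
`IsBCF`. -/
def IsDigitExpansion (D : Set k) (αs : ℕ → K) (a : ℕ → k) : Prop :=
  ∀ n, a n ∈ D ∧ ‖αs n - algebraMap k K (a n)‖ < 1 ∧
    αs (n + 1) = (αs n - algebraMap k K (a n))⁻¹

theorem IsDigitExpansion.isCompleteQuotients (h : IsDigitExpansion D αs a) :
    IsCompleteQuotients αs (fun n ↦ algebraMap k K (a n)) :=
  fun n ↦ (h n).2.2

theorem IsDigitExpansion.one_lt_norm (h : IsDigitExpansion D αs a)
    (hirr : ∀ n, αs n ≠ algebraMap k K (a n)) {N : ℕ} (hN : 0 < N) (hper : αs N = αs 0) (n : ℕ) :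
    1 < ‖αs n‖ := by
  have hsucc : ∀ m, 1 < ‖αs (m + 1)‖ := fun m ↦
    h.isCompleteQuotients.one_lt_norm_succ (hirr m) (h m).2.1
  cases n with
  | zero =>
    rw [← hper, ← Nat.sub_add_cancel hN]
    exact hsucc (N - 1)
  | succ n => exact hsucc n

theorem IsDigitExpansion.exists_reverse (h : IsDigitExpansion D αs a)
    (hc : IsCompleteQuotients αcs (fun n ↦ algebraMap k K (a n))) (hlt : ∀ n, ‖αcs n‖ < 1) {N : ℕ}
    (hN : 0 < N) (hper : αcs N = αcs 0) :
    ∃ βs : ℕ → K, ∃ b : ℕ → k, IsDigitExpansion D βs b ∧ βs 0 = -(αcs 0)⁻¹ ∧ βs N = βs 0 ∧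
      ∀ j < N, b j = a (N - 1 - j) := by
  refine ⟨fun j ↦ algebraMap k K (a (reflectMod N j)) - αcs (reflectMod N j),
    fun j ↦ a (reflectMod N j), fun j ↦ ⟨(h _).1, ?_, hc.reverse hN hper j⟩, ?_, ?_, ?_⟩
  · rw [sub_sub_cancel_left, norm_neg]
    exact hlt _
  · beta_reduce
    rw [← hc.neg_inv_succ, reflectMod_of_lt hN, Nat.sub_zero, Nat.sub_add_cancel hN, hper]
  · simp only [reflectMod_self]
  · exact fun j hj ↦ congrArg a (reflectMod_of_lt hj)

theorem browkin_purely_periodic_conjugate_general [IsUltrametricDist K]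
    (hαs : IsDigitExpansion D αs a)
    (hαcs : IsCompleteQuotients αcs (fun n ↦ algebraMap k K (a n)))
    (hconj : IsQuadraticConj (algebraMap k K).fieldRange (αs 0) (αcs 0)) (hne : αs 0 ≠ αcs 0)
    {N : ℕ} (hN : 0 < N) (hper : αs N = αs 0) :
    1 < ‖αs 0‖ ∧ ‖αcs 0‖ < 1 ∧ ∃ βs : ℕ → K, ∃ b : ℕ → k,
      IsDigitExpansion D βs b ∧ βs 0 = -(αcs 0)⁻¹ ∧ βs N = βs 0 ∧
      ∀ j < N, b j = a (N - 1 - j) := by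
  have ha : ∀ n, algebraMap k K (a n) ∈ (algebraMap k K).fieldRange := fun n ↦ ⟨a n, rfl⟩
  have hconj_all := hαs.isCompleteQuotients.isQuadraticConj hαcs ha hconj
  have hcper : αcs N = αcs 0 := (hper ▸ hconj_all N).right_unique hconj
  have hirr := fun n ↦ (hconj_all n).ne_of_mem (ha n)
  have hcirr := fun n ↦ (hconj_all n).symm.ne_of_mem (ha n)
  have hlarge : ∀ n, 1 < ‖αs n‖ := hαs.one_lt_norm hirr hN hper
  have hdigit : ∀ n, 1 < ‖algebraMap k K (a n)‖ := fun n ↦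
    one_lt_norm_of_norm_sub_lt_one (hlarge n) (hαs n).2.1
  obtain ⟨m, hmN, hm⟩ := hαs.isCompleteQuotients.exists_norm_le_one hαcs hne hirr hcirr
    (fun n ↦ (hαs n).2.1) hN hper hcper
  have hsmall : ∀ n, ‖αcs n‖ < 1 := hαcs.norm_lt_one_of_periodic hdigit hN hcper hmN hm
  exact ⟨hlarge 0, hsmall 0, hαs.exists_reverse hαcs hsmall hN hcper⟩

end UltrametricExpansion

section Padic

variable {p : ℕ} [Fact p.Prime]

theorem padic_valuation_neg_iff (x : ℚ_[p]) : x.valuation < 0 ↔ 1 < ‖x‖ := by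
  rw [← not_le, ← Padic.norm_le_one_iff_val_nonneg, not_le]

theorem padic_valuation_pos_iff {x : ℚ_[p]} (hx : x ≠ 0) : 0 < x.valuation ↔ ‖x‖ < 1 := by
  rw [← neg_lt_zero, ← Padic.valuation_inv, padic_valuation_neg_iff, norm_inv,
    one_lt_inv₀ (norm_pos_iff.2 hx)]

end Padic

/-- if the BCF of `α` is purely periodic of period `N` (`α_N = α`),
then `α` is regular, and the BCF of `β = −1/α^c` is purely periodic with the
reversed period: `β_N = β` and `s(β_j) = a_{N−1−j}` for `0 ≤ j < N`. -/
theorem browkin_purely_periodic_conjugate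
    (p : ℕ) [Fact p.Prime] (hp : Odd p)
    (α : ℚ_[p]) (hirr : ∀ q : ℚ, α ≠ (q : ℚ_[p]))
    (tr nm : ℚ) (hquad : α ^ 2 - (tr : ℚ_[p]) * α + (nm : ℚ_[p]) = 0)
    (αc : ℚ_[p]) (hαc : αc = (tr : ℚ_[p]) - α)
    (αs : ℕ → ℚ_[p]) (a : ℕ → ℚ) (hα0 : αs 0 = α) (hbcf : IsBCF p αs a)
    (αcs : ℕ → ℚ_[p]) (hαc0 : αcs 0 = αc)
    (hαcstep : ∀ n, αcs (n + 1) = (αcs n - (a n : ℚ_[p]))⁻¹)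
    (N : ℕ) (hN : 1 ≤ N) (hper : αs N = α) :
    α.valuation < 0 ∧ 0 < αc.valuation ∧
    ∃ βs : ℕ → ℚ_[p], ∃ b : ℕ → ℚ,
      IsBCF p βs b ∧ βs 0 = -αc⁻¹ ∧ βs N = βs 0 ∧
      ∀ j < N, b j = a (N - 1 - j) := by
  subst hα0 hαc
  have hconj : IsQuadraticConj (algebraMap ℚ ℚ_[p]).fieldRange (αs 0) (αcs 0) :=
    hαc0 ▸ .of_quadratic hirr hquad
  have hαc_ne : αcs 0 ≠ 0 := hconj.symm.ne_of_mem (zero_mem _)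
  have hαs : IsDigitExpansion {y | IsBrowkinDigit p y} αs a := hbcf
  obtain ⟨hα, hαc, hβ⟩ :=
    browkin_purely_periodic_conjugate_general hαs hαcstep hconj hconj.ne hN hper
  rw [← hαc0]
  exact ⟨(padic_valuation_neg_iff _).2 hα, (padic_valuation_pos_iff hαc_ne).2 hαc, hβ⟩
end

section
/- Let p be an odd prime and α ∈ ℚ_p a quadratic irrational whose BCF complete quotients admit a representation α_n = (b_n + δ)/(p^{k_n} c_n) with b_n, c_n, k_n ∈ ℤ, c_n ≠ 0, p ∤ c_n, where δ ∈ ℚ_p and δ² = Δ is a non-square integer. Then the BCF expansion of α is periodic (there exist m ≥ 0 and N ≥ 1 with α_{m+N} = α_m) if and only if there exists a strictly increasing sequence of indices (n_t) on which |b_{n_t}| is constant. -/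
/-!
Write `α_n = (b_n + δ) / D_n` with `D_n = p ^ k_n * c_n`. Comparing the coefficients of `1` and `δ`
in `α_{n+1} (α_n - a_n) = 1` gives `D_n D_{n+1} = Δ - b_{n+1} ^ 2`, and `|α_n|_p > 1` for `n ≥ 1`
forces `k_n > 0`. So, for `n ≥ 2`, `D_n` is an integer dividing the nonzero integer `Δ - b_n ^ 2`,
and a bound on `|b_n|` leaves only finitely many pairs `(b_n, D_n)`; a pair that occurs twice gives
two equal complete quotients. Conversely, the algorithm is deterministic, so a repeated complete
quotient repeats forever, and `α_n` determines `b_n`.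
-/

section RatCast

variable {K : Type*} [Field K] [CharZero K] {δ : K}

theorem ratCast_add_ratCast_mul_inj (hδ : ∀ q : ℚ, δ ≠ q) {x y x' y' : ℚ} :
    (x : K) + y * δ = x' + y' * δ ↔ x = x' ∧ y = y' := by
  refine ⟨fun h => ?_, by rintro ⟨rfl, rfl⟩; rfl⟩
  have hy : y = y' := by
    by_contra hne
    have hsub : (y : K) - y' ≠ 0 := sub_ne_zero.2 (by exact_mod_cast hne)
    refine hδ ((x' - x) / (y - y')) ?_
    push_cast
    rw [eq_div_iff hsub]
    linear_combination h
  subst hy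
  exact ⟨by exact_mod_cast add_right_cancel h, rfl⟩

theorem ne_ratCast_of_sq_eq_intCast {Δ : ℤ} (hδ : δ ^ 2 = Δ) (hΔ : ¬IsSquare Δ) (q : ℚ) :
    δ ≠ q := by
  rintro rfl
  refine hΔ (Rat.isSquare_intCast_iff.1 ⟨q, ?_⟩)
  rw [← sq]
  exact_mod_cast hδ.symm

theorem num_eq_of_add_div_eq_add_div (hδ : ∀ q : ℚ, δ ≠ q) {b b' D D' : ℚ} (hD : D ≠ 0)
    (hD' : D' ≠ 0) (h : ((b : K) + δ) / D = (b' + δ) / D') : b = b' := by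
  rw [div_eq_div_iff (by exact_mod_cast hD) (by exact_mod_cast hD')] at h
  have hcoeff : ((b * D' : ℚ) : K) + D' * δ = (b' * D : ℚ) + D * δ := by
    push_cast
    linear_combination h
  obtain ⟨hb, rfl⟩ := (ratCast_add_ratCast_mul_inj hδ).1 hcoeff
  exact mul_right_cancel₀ hD' hb

theorem den_mul_den_of_mul_sub_eq_one (hδ : ∀ q : ℚ, δ ≠ q) {Δ a b b' D D' : ℚ}
    (hΔ : δ ^ 2 = Δ) (hD : D ≠ 0) (hD' : D' ≠ 0)
    (h : ((b' : K) + δ) / D' * ((b + δ) / D - a) = 1) : D * D' = Δ - b' ^ 2 := by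
  have hDK : (D : K) ≠ 0 := by exact_mod_cast hD
  have hDK' : (D' : K) ≠ 0 := by exact_mod_cast hD'
  have hcleared : ((b' : K) + δ) * (b + δ - a * D) = D * D' := by
    field_simp at h
    linear_combination h
  have hcoeff : ((b' * (b - a * D) + Δ : ℚ) : K) + (b + b' - a * D : ℚ) * δ =
      (D * D' : ℚ) + (0 : ℚ) * δ := by
    push_cast
    linear_combination hcleared - hΔ
  obtain ⟨hone, hdelta⟩ := (ratCast_add_ratCast_mul_inj hδ).1 hcoeff
  linear_combination b' * hdelta - hone

end RatCast

theorem finite_setOf_dvd_sub_sq {Δ : ℤ} (hΔ : ¬IsSquare Δ) (B : ℤ) :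
    {q : ℤ × ℤ | |q.1| ≤ B ∧ q.2 ∣ Δ - q.1 ^ 2}.Finite := by
  refine ((Set.finite_Icc (-B) B).prod
    (Set.finite_Icc (-(|Δ| + B ^ 2)) (|Δ| + B ^ 2))).subset ?_
  rintro ⟨x, d⟩ ⟨hx : |x| ≤ B, hd : d ∣ Δ - x ^ 2⟩
  have hne : Δ - x ^ 2 ≠ 0 := fun h => hΔ ⟨x, by rw [← sq]; exact sub_eq_zero.1 h⟩
  refine ⟨abs_le.1 hx, abs_le.1 ?_⟩
  calc |d| ≤ |Δ - x ^ 2| := Int.le_of_dvd (abs_pos.2 hne) ((abs_dvd_abs _ _).2 hd)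
    _ ≤ |Δ| + |x ^ 2| := abs_sub _ _
    _ ≤ |Δ| + B ^ 2 := by
      rw [abs_pow]
      gcongr

section Padic

variable {p : ℕ} [Fact p.Prime]

theorem pow_succ_dvd_of_norm_div_pow_lt_one {z : ℤ} {j : ℕ}
    (h : ‖(z : ℚ_[p]) / (p : ℚ_[p]) ^ j‖ < 1) : (p : ℤ) ^ (j + 1) ∣ z := by
  have hp : (0 : ℝ) < p := by exact_mod_cast (Fact.out : p.Prime).pos
  rw [norm_div, Padic.norm_p_pow, div_lt_one (zpow_pos hp _)] at h
  have hle := (Padic.norm_le_pow_iff_norm_lt_pow_add_one (z : ℚ_[p]) (-((j + 1 : ℕ) : ℤ))).2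
    (by simpa using h)
  exact_mod_cast (Padic.norm_int_le_pow_iff_dvd z (j + 1)).1 hle

theorem pos_of_one_lt_norm_div_zpow_mul {x : ℚ_[p]} {k c : ℤ} (hx : ‖x‖ ≤ 1)
    (hc : ¬(p : ℤ) ∣ c) (h : 1 < ‖x / ((p : ℚ_[p]) ^ k * c)‖) : 0 < k := by
  have hp : (1 : ℝ) < p := by exact_mod_cast (Fact.out : p.Prime).one_lt
  have hcnorm : ‖(c : ℚ_[p])‖ = 1 :=
    (Padic.norm_int_le_one c).eq_of_not_lt fun hlt => hc (Padic.norm_intCast_lt_one_iff.1 hlt)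
  rw [norm_div, norm_mul, hcnorm, mul_one, Padic.norm_p_zpow, zpow_neg, div_inv_eq_mul] at h
  refine (one_lt_zpow_iff_right₀ hp).1 (h.trans_le ?_)
  exact mul_le_of_le_one_left (by positivity) hx

theorem IsBrowkinDigit.eq_of_norm_sub_lt_one {y z : ℚ} (hy : IsBrowkinDigit p y)
    (hz : IsBrowkinDigit p z) (h : ‖(y : ℚ_[p]) - z‖ < 1) : y = z := by
  obtain ⟨⟨u, i, hu⟩, hy_lower, hy_upper⟩ := hy
  obtain ⟨⟨v, j, hv⟩, hz_lower, hz_upper⟩ := hz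
  have hp : (0 : ℚ) < p := by exact_mod_cast (Fact.out : p.Prime).pos
  have hsub : y - z = ((u * p ^ j - v * p ^ i : ℤ) : ℚ) / p ^ (i + j) := by
    rw [hu, hv]
    push_cast
    field_simp
    ring
  obtain ⟨t, ht⟩ := pow_succ_dvd_of_norm_div_pow_lt_one (p := p) (j := i + j)
    (z := u * p ^ j - v * p ^ i) (by
      convert h
      exact_mod_cast congrArg (Rat.cast : ℚ → ℚ_[p]) hsub.symm)
  have hmul : y - z = p * t := by
    rw [hsub, ht]
    push_cast
    field_simp
    ring
  have ht_abs : |(t : ℚ)| < 1 := by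
    rw [abs_lt]
    constructor <;> nlinarith
  have ht_zero : t = 0 := Int.abs_lt_one_iff.1 (by exact_mod_cast ht_abs)
  rw [ht_zero, Int.cast_zero, mul_zero] at hmul
  exact sub_eq_zero.1 hmul

namespace IsBCF

variable {αs : ℕ → ℚ_[p]} {a : ℕ → ℚ}

theorem partialQuotient_eq_of_eq (hbcf : IsBCF p αs a) {i j : ℕ} (hij : αs i = αs j) :
    a i = a j := by
  refine (hbcf i).1.eq_of_norm_sub_lt_one (hbcf j).1 ?_
  have hi : dist (a i : ℚ_[p]) (αs i) < 1 := by
    rw [dist_comm, dist_eq_norm]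
    exact (hbcf i).2.1
  have hj : dist (αs i) (a j : ℚ_[p]) < 1 := by
    rw [hij, dist_eq_norm]
    exact (hbcf j).2.1
  rw [← dist_eq_norm]
  exact (dist_triangle_max _ _ _).trans_lt (max_lt hi hj)

theorem periodic_of_add_eq (hbcf : IsBCF p αs a) {m N : ℕ} (h : αs (m + N) = αs m) :
    Function.Periodic (fun t => αs (m + t)) N := by
  intro t
  induction t with
  | zero => simpa using h
  | succ t ih =>
    simp only [← add_assoc, add_right_comm _ 1 N] at ih ⊢
    rw [(hbcf _).2.2, (hbcf (m + t)).2.2, ih, hbcf.partialQuotient_eq_of_eq ih]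

theorem sub_ne_zero_of_succ_ne_zero (hbcf : IsBCF p αs a) {n : ℕ} (h : αs (n + 1) ≠ 0) :
    αs n - a n ≠ 0 :=
  fun h0 => h (by rw [(hbcf n).2.2, h0, inv_zero])

theorem one_lt_norm_succ (hbcf : IsBCF p αs a) {n : ℕ} (h : αs (n + 1) ≠ 0) :
    1 < ‖αs (n + 1)‖ := by
  rw [(hbcf n).2.2, norm_inv]
  exact (one_lt_inv₀ (norm_pos_iff.2 (hbcf.sub_ne_zero_of_succ_ne_zero h))).2 (hbcf n).2.1

end IsBCF

/-- The representation `α_n = (b_n + δ) / (p ^ k_n * c_n)`, with `p ∤ c_n`, of a sequence of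
elements of `ℚ_[p]`, where `δ` is a `p`-adic square root of the non-square integer `Δ`. -/
structure IsQuadraticRep (αs : ℕ → ℚ_[p]) (δ : ℚ_[p]) (Δ : ℤ) (b c k : ℕ → ℤ) : Prop where
  sq_eq : δ ^ 2 = Δ
  not_isSquare : ¬IsSquare Δ
  not_dvd : ∀ n, ¬(p : ℤ) ∣ c n
  eq_div : ∀ n, αs n = ((b n : ℚ_[p]) + δ) / ((p : ℚ_[p]) ^ k n * (c n : ℚ_[p]))

/-- The denominator `p ^ k_n * c_n` of the `n`-th complete quotient. It is a rational number because
`k_n` may be negative (which happens only for `n = 0`). -/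
def quotientDen (p : ℕ) (c k : ℕ → ℤ) (n : ℕ) : ℚ :=
  (p : ℚ) ^ k n * c n

namespace IsQuadraticRep

variable {αs : ℕ → ℚ_[p]} {a : ℕ → ℚ} {δ : ℚ_[p]} {Δ : ℤ} {b c k : ℕ → ℤ}

theorem ne_ratCast (h : IsQuadraticRep αs δ Δ b c k) (q : ℚ) : δ ≠ q :=
  ne_ratCast_of_sq_eq_intCast h.sq_eq h.not_isSquare q

theorem quotientDen_ne_zero (h : IsQuadraticRep αs δ Δ b c k) (n : ℕ) :
    quotientDen p c k n ≠ 0 := by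
  have hp : (p : ℚ) ≠ 0 := by exact_mod_cast (Fact.out : p.Prime).ne_zero
  have hc : c n ≠ 0 := fun hc => h.not_dvd n (hc ▸ dvd_zero _)
  exact mul_ne_zero (zpow_ne_zero _ hp) (by exact_mod_cast hc)

theorem eq_div_quotientDen (h : IsQuadraticRep αs δ Δ b c k) (n : ℕ) :
    αs n = (((b n : ℚ) : ℚ_[p]) + δ) / (quotientDen p c k n : ℚ_[p]) := by
  simp [h.eq_div, quotientDen]

theorem num_eq_of_eq (h : IsQuadraticRep αs δ Δ b c k) {i j : ℕ} (hij : αs i = αs j) :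
    b i = b j := by
  rw [h.eq_div_quotientDen, h.eq_div_quotientDen] at hij
  exact_mod_cast num_eq_of_add_div_eq_add_div h.ne_ratCast (h.quotientDen_ne_zero i)
    (h.quotientDen_ne_zero j) hij

theorem ne_zero (h : IsQuadraticRep αs δ Δ b c k) (n : ℕ) : αs n ≠ 0 := by
  rw [h.eq_div_quotientDen]
  refine div_ne_zero (fun h0 => h.ne_ratCast (-b n) ?_)
    (by exact_mod_cast h.quotientDen_ne_zero n)
  push_cast at h0 ⊢
  linear_combination h0

theorem norm_sqrt_le_one (h : IsQuadraticRep αs δ Δ b c k) : ‖δ‖ ≤ 1 := by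
  rw [← pow_le_one_iff_of_nonneg (norm_nonneg δ) two_ne_zero, ← norm_pow, h.sq_eq]
  exact Padic.norm_int_le_one Δ

theorem quotientDen_mul_quotientDen_succ (h : IsQuadraticRep αs δ Δ b c k)
    (hbcf : IsBCF p αs a) (n : ℕ) :
    quotientDen p c k n * quotientDen p c k (n + 1) = (Δ : ℚ) - (b (n + 1) : ℚ) ^ 2 := by
  refine den_mul_den_of_mul_sub_eq_one (a := a n) (b := b n) h.ne_ratCast
    (by exact_mod_cast h.sq_eq) (h.quotientDen_ne_zero n) (h.quotientDen_ne_zero (n + 1)) ?_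
  rw [← h.eq_div_quotientDen, ← h.eq_div_quotientDen, (hbcf n).2.2]
  exact inv_mul_cancel₀ (hbcf.sub_ne_zero_of_succ_ne_zero (h.ne_zero (n + 1)))

theorem exponent_succ_pos (h : IsQuadraticRep αs δ Δ b c k) (hbcf : IsBCF p αs a) (n : ℕ) :
    0 < k (n + 1) := by
  refine pos_of_one_lt_norm_div_zpow_mul (x := (b (n + 1) : ℚ_[p]) + δ) ?_ (h.not_dvd (n + 1)) ?_
  · exact (Padic.nonarchimedean _ _).trans (max_le (Padic.norm_int_le_one _) h.norm_sqrt_le_one)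
  · rw [← h.eq_div]
    exact hbcf.one_lt_norm_succ (h.ne_zero (n + 1))

theorem exists_intCast_eq_quotientDen_succ (h : IsQuadraticRep αs δ Δ b c k)
    (hbcf : IsBCF p αs a) (n : ℕ) : ∃ d : ℤ, (d : ℚ) = quotientDen p c k (n + 1) := by
  obtain ⟨e, he⟩ := Int.eq_ofNat_of_zero_le (h.exponent_succ_pos hbcf n).le
  exact ⟨p ^ e * c (n + 1), by simp [quotientDen, he]⟩

theorem exists_dvd_sub_sq (h : IsQuadraticRep αs δ Δ b c k) (hbcf : IsBCF p αs a) {n : ℕ}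
    (hn : 2 ≤ n) : ∃ d : ℤ, (d : ℚ) = quotientDen p c k n ∧ d ∣ Δ - b n ^ 2 := by
  obtain ⟨n, rfl⟩ := Nat.exists_eq_add_of_le' hn
  obtain ⟨d, hd⟩ := h.exists_intCast_eq_quotientDen_succ hbcf n
  obtain ⟨d', hd'⟩ := h.exists_intCast_eq_quotientDen_succ hbcf (n + 1)
  have hmul := h.quotientDen_mul_quotientDen_succ hbcf (n + 1)
  rw [← hd, ← hd'] at hmul
  exact ⟨d', hd', Dvd.intro_left d (by exact_mod_cast hmul)⟩

theorem exists_add_eq_of_infinite (h : IsQuadraticRep αs δ Δ b c k) (hbcf : IsBCF p αs a) {B : ℤ}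
    (hB : {n | |b n| ≤ B}.Infinite) : ∃ m N : ℕ, 1 ≤ N ∧ αs (m + N) = αs m := by
  have hfinite := (finite_setOf_dvd_sub_sq h.not_isSquare B).image
    (Prod.map id (Int.cast : ℤ → ℚ))
  obtain ⟨m, -, n, -, hmn, heq⟩ :=
    (hB.sdiff (Set.finite_lt_nat 2)).exists_lt_map_eq_of_mapsTo
      (f := fun n => (b n, quotientDen p c k n)) (fun n hn => by
        obtain ⟨d, hd, hdvd⟩ := h.exists_dvd_sub_sq hbcf (not_lt.1 hn.2)
        exact ⟨(b n, d), ⟨hn.1, hdvd⟩, Prod.ext rfl hd⟩) hfinite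
  obtain ⟨hb, hD⟩ := Prod.mk.inj heq
  refine ⟨m, n - m, Nat.sub_pos_of_lt hmn, ?_⟩
  rw [Nat.add_sub_cancel' hmn.le, h.eq_div_quotientDen, h.eq_div_quotientDen, hb, hD]

end IsQuadraticRep

theorem browkin_periodic_iff_b_constant_subseq_general {αs : ℕ → ℚ_[p]} {a : ℕ → ℚ} {δ : ℚ_[p]}
    {Δ : ℤ} {b c k : ℕ → ℤ} (hbcf : IsBCF p αs a) (h : IsQuadraticRep αs δ Δ b c k) :
    (∃ m N : ℕ, 1 ≤ N ∧ αs (m + N) = αs m) ↔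
      (∃ f : ℕ → ℕ, StrictMono f ∧ ∀ t : ℕ, |b (f t)| = |b (f 0)|) := by
  constructor
  · rintro ⟨m, N, hN, hmN⟩
    refine ⟨fun t => m + t * N, fun s t hst => ?_, fun t => congrArg abs (h.num_eq_of_eq ?_)⟩
    · exact Nat.add_lt_add_left (Nat.mul_lt_mul_of_pos_right hst hN) m
    · simpa using (hbcf.periodic_of_add_eq hmN).nat_mul_eq t
  · rintro ⟨f, hf, hconst⟩
    have hbounded : Set.range f ⊆ {n | |b n| ≤ |b (f 0)|} :=
      Set.range_subset_iff.2 fun t => (hconst t).le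
    exact h.exists_add_eq_of_infinite hbcf
      ((Set.infinite_range_of_injective hf.injective).mono hbounded)

end Padic

/-- the BCF expansion of `α` is periodic iff there is a strictly
increasing sequence of indices on which `|b_n|` is constant. -/
theorem browkin_periodic_iff_b_constant_subseq
    (p : ℕ) [Fact p.Prime] (hp : Odd p)
    (α : ℚ_[p]) (hirr : ∀ q : ℚ, α ≠ (q : ℚ_[p]))
    (αs : ℕ → ℚ_[p]) (a : ℕ → ℚ) (hα0 : αs 0 = α) (hbcf : IsBCF p αs a)
    (δ : ℚ_[p]) (Δ : ℤ) (hδ : δ ^ 2 = (Δ : ℚ_[p])) (hΔ : ¬IsSquare Δ)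
    (b c : ℕ → ℤ) (kk : ℕ → ℤ)
    (hrep : ∀ n, c n ≠ 0 ∧ ¬((p : ℤ) ∣ c n) ∧
      αs n = ((b n : ℚ_[p]) + δ) / ((p : ℚ_[p]) ^ (kk n) * (c n : ℚ_[p])))
    :
    (∃ m N : ℕ, 1 ≤ N ∧ αs (m + N) = αs m) ↔
      (∃ f : ℕ → ℕ, StrictMono f ∧ ∀ t : ℕ, |b (f t)| = |b (f 0)|) := by
  exact browkin_periodic_iff_b_constant_subseq_general hbcf
    ⟨hδ, hΔ, fun n => (hrep n).2.1, fun n => (hrep n).2.2⟩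
end

section
/- Let p be an odd prime and α ∈ ℚ_p a quadratic irrational whose BCF complete quotients admit a representation α_n = (b_n + δ)/(p^{k_n} c_n) with b_n, c_n, k_n ∈ ℤ, c_n ≠ 0, p ∤ c_n, where δ ∈ ℚ_p and δ² = Δ is a non-square integer. If there exists a strictly increasing sequence of indices (t_n) with b_{t_n}² < Δ for all n (i.e., the real embeddings of α_{t_n} have negative norm), then the BCF expansion of α is periodic: there exist m ≥ 0 and N ≥ 1 with α_{m+N} = α_m. -/
/-!
If `α` and `(α - a)⁻¹` have the forms `(b + δ) / q` and `(b' + δ) / q'` with `a`, `b`, `b'`, `q`,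
`q'` rational, comparing coefficients of `1` and `δ` gives `q * q' = Δ - b' ^ 2`. Beyond the initial
one, complete quotients have norm greater than `1` while `b + δ` is a `p`-adic integer, so the
denominators `p ^ k * c` are integers. Hence `b' ^ 2 < Δ` bounds both `|b'|` and `|q'|` by `Δ`; when
this happens infinitely often, some pair `(b', q')`, and with it a complete quotient, recurs.
-/

open Filter

theorem frequently_atTop_add_nat {P : ℕ → Prop} (h : ∃ᶠ n in atTop, P n) (k : ℕ) :
    ∃ᶠ n in atTop, P (n + k) := by
  rwa [← map_add_atTop_eq_nat k, frequently_map] at h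

theorem prodMk_mem_Icc_prod_Icc_of_mul_eq_sub_sq {Δ b q q' : ℤ} (h : q * q' = Δ - b ^ 2)
    (hb : b ^ 2 < Δ) : (b, q') ∈ Set.Icc (-Δ) Δ ×ˢ Set.Icc (-Δ) Δ := by
  have hbΔ : |b| ≤ Δ := by
    rw [← Int.natCast_natAbs]
    exact (Int.natAbs_le_self_sq b).trans hb.le
  have hqΔ : |q'| ≤ Δ := by
    have hdvd : |q'| ∣ Δ - b ^ 2 := (abs_dvd _ _).mpr ⟨q, by rw [← h, mul_comm]⟩
    exact (Int.le_of_dvd (sub_pos.mpr hb) hdvd).trans (sub_le_self _ (sq_nonneg b))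
  exact ⟨abs_le.mp hbΔ, abs_le.mp hqΔ⟩

theorem norm_le_one_of_one_lt_norm_div {K : Type*} [NormedDivisionRing K] {x y : K} (hx : ‖x‖ ≤ 1)
    (h : 1 < ‖x / y‖) : ‖y‖ ≤ 1 := by
  contrapose! h
  rw [norm_div]
  exact div_le_one_of_le₀ (hx.trans h.le) (norm_nonneg y)

theorem ratCast_ne_of_sq_eq_intCast {K : Type*} [DivisionRing K] [CharZero K] {δ : K} {Δ : ℤ}
    (hδ : δ ^ 2 = Δ) (hΔ : ¬IsSquare Δ) (q : ℚ) : (q : K) ≠ δ := by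
  rintro rfl
  have hq : q ^ 2 = Δ := by exact_mod_cast hδ
  exact hΔ (Rat.isSquare_intCast_iff.mp ⟨q, by rw [← hq, sq]⟩)

theorem add_ne_zero_of_forall_ratCast_ne {K : Type*} [DivisionRing K] {δ : K}
    (hδ : ∀ q : ℚ, (q : K) ≠ δ) (x : ℚ) : (x : K) + δ ≠ 0 := by
  intro h
  exact hδ (-x) (by push_cast; exact neg_eq_of_add_eq_zero_right h)

section Field

variable {K : Type*} [Field K] [CharZero K] {δ : K}

-- As `1` and `δ` are independent over `ℚ`, a rational product forces `y + δ = -(x - δ)`.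
theorem eq_sub_sq_of_add_mul_add_eq_ratCast (hδ : ∀ q : ℚ, (q : K) ≠ δ) {D x y s : ℚ}
    (hD : δ ^ 2 = D) (h : ((x : K) + δ) * (y + δ) = s) : s = D - x ^ 2 := by
  have hxy : x + y = 0 := by
    by_contra hne
    have hne' : (x : K) + y ≠ 0 := by exact_mod_cast hne
    refine hδ ((s - x * y - D) / (x + y)) ?_
    push_cast
    rw [div_eq_iff hne']
    linear_combination hD - h
  obtain rfl : y = -x := by linear_combination hxy
  have hs : (s : K) = D - x ^ 2 := by
    push_cast at h
    linear_combination hD - h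
  exact_mod_cast hs

theorem mul_eq_sub_sq_of_div_eq_inv (hδ : ∀ q : ℚ, (q : K) ≠ δ) {D a b b' q q' : ℚ}
    (hD : δ ^ 2 = D) (hq : q ≠ 0) (hq' : q' ≠ 0)
    (h : ((b' : K) + δ) / q' = ((b + δ) / q - a)⁻¹) : q * q' = D - b' ^ 2 := by
  have hqK : (q : K) ≠ 0 := by exact_mod_cast hq
  have hqK' : (q' : K) ≠ 0 := by exact_mod_cast hq'
  have hne : ((b - a * q : ℚ) : K) + δ ≠ 0 := add_ne_zero_of_forall_ratCast_ne hδ _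
  have hsub : ((b : K) + δ) / q - a = (((b - a * q : ℚ) : K) + δ) / q := by
    push_cast
    field_simp
    ring
  rw [hsub, inv_div, div_eq_div_iff hqK' hne] at h
  exact eq_sub_sq_of_add_mul_add_eq_ratCast hδ hD (by exact_mod_cast h)

theorem exists_add_eq_of_frequently_sq_lt {Δ : ℤ} (hδ : δ ^ 2 = Δ) (hΔ : ¬IsSquare Δ)
    {α : ℕ → K} {a : ℕ → ℚ} {b q : ℕ → ℤ} (hq : ∀ n, q n ≠ 0)
    (hα : ∀ n, α n = (b n + δ) / q n) (hstep : ∀ n, α (n + 1) = (α n - a n)⁻¹)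
    (hneg : ∃ᶠ n in atTop, b n ^ 2 < Δ) : ∃ m N : ℕ, 1 ≤ N ∧ α (m + N) = α m := by
  have hnorm (n : ℕ) : q n * q (n + 1) = Δ - b (n + 1) ^ 2 := by
    have h := hstep n
    rw [hα, hα] at h
    have hrat : (q n * q (n + 1) : ℚ) = Δ - b (n + 1) ^ 2 :=
      mul_eq_sub_sq_of_div_eq_inv (ratCast_ne_of_sq_eq_intCast hδ hΔ) (by exact_mod_cast hδ)
        (by exact_mod_cast hq n) (by exact_mod_cast hq (n + 1)) (b := b n) (by exact_mod_cast h)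
    exact_mod_cast hrat
  have hinf : {n | b (n + 1) ^ 2 < Δ}.Infinite :=
    Nat.frequently_atTop_iff_infinite.mp (frequently_atTop_add_nat hneg 1)
  obtain ⟨m, -, n, -, hmn, heq⟩ := hinf.exists_lt_map_eq_of_mapsTo
    (f := fun n ↦ (b (n + 1), q (n + 1)))
    (fun n hn ↦ prodMk_mem_Icc_prod_Icc_of_mul_eq_sub_sq (hnorm n) hn)
    ((Set.finite_Icc _ _).prod (Set.finite_Icc _ _))
  obtain ⟨hbeq, hqeq⟩ := Prod.mk.inj heq
  refine ⟨m + 1, n - m, by lia, ?_⟩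
  rw [show m + 1 + (n - m) = n + 1 by lia, hα, hα, hbeq, hqeq]

end Field

section Padic

variable {p : ℕ} [Fact p.Prime]

theorem exists_intCast_eq_zpow_mul_of_norm_le_one {k c : ℤ} (h : ‖(p : ℚ_[p]) ^ k * c‖ ≤ 1) :
    ∃ z : ℤ, (p : ℚ_[p]) ^ k * c = z := by
  have hp : (p : ℚ_[p]) ≠ 0 := by exact_mod_cast (Fact.out : p.Prime).ne_zero
  obtain ⟨m, rfl | rfl⟩ := k.eq_nat_or_neg
  · exact ⟨p ^ m * c, by push_cast; rw [zpow_natCast]⟩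
  · have hc : ‖(c : ℚ_[p])‖ ≤ (p : ℝ) ^ (-m : ℤ) := by
      have hpos : (0 : ℝ) < p ^ m := by exact_mod_cast pow_pos (Fact.out : p.Prime).pos m
      rw [norm_mul, Padic.norm_p_zpow, neg_neg, zpow_natCast] at h
      rw [zpow_neg, zpow_natCast, ← one_div, le_div_iff₀' hpos]
      exact h
    obtain ⟨z, rfl⟩ := (Padic.norm_int_le_pow_iff_dvd c m).mp hc
    refine ⟨z, ?_⟩
    push_cast
    rw [zpow_neg, zpow_natCast, inv_mul_cancel_left₀ (pow_ne_zero m hp)]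

theorem norm_intCast_add_le_one_of_sq_eq_intCast {δ : ℚ_[p]} {Δ : ℤ} (hδ : δ ^ 2 = Δ) (b : ℤ) :
    ‖(b : ℚ_[p]) + δ‖ ≤ 1 := by
  have hδ' : ‖δ‖ ≤ 1 := by
    rw [← pow_le_one_iff_of_nonneg (norm_nonneg δ) two_ne_zero, ← norm_pow, hδ]
    exact Padic.norm_int_le_one Δ
  exact (Padic.nonarchimedean _ _).trans (max_le (Padic.norm_int_le_one b) hδ')

theorem browkin_periodic_of_negative_norms_general {α : ℕ → ℚ_[p]} {a : ℕ → ℚ}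
    (hα : ∀ n, ‖α n - a n‖ < 1 ∧ α (n + 1) = (α n - a n)⁻¹)
    {δ : ℚ_[p]} {Δ : ℤ} (hδ : δ ^ 2 = Δ) (hΔ : ¬IsSquare Δ) {b c k : ℕ → ℤ}
    (hrep : ∀ n, c n ≠ 0 ∧ α n = (b n + δ) / ((p : ℚ_[p]) ^ k n * c n))
    (hneg : ∃ᶠ n in atTop, b n ^ 2 < Δ) : ∃ m N : ℕ, 1 ≤ N ∧ α (m + N) = α m := by
  have hden (n : ℕ) : (p : ℚ_[p]) ^ k n * c n ≠ 0 :=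
    mul_ne_zero (zpow_ne_zero _ (by exact_mod_cast (Fact.out : p.Prime).ne_zero))
      (by exact_mod_cast (hrep n).1)
  have hα0 (n : ℕ) : α n ≠ 0 := by
    rw [(hrep n).2]
    have hnum := add_ne_zero_of_forall_ratCast_ne (ratCast_ne_of_sq_eq_intCast hδ hΔ) (b n)
    exact div_ne_zero (by exact_mod_cast hnum) (hden n)
  have hlarge (n : ℕ) : 1 < ‖α (n + 1)‖ := by
    have hne := hα0 (n + 1)
    rw [(hα n).2] at hne ⊢
    rw [norm_inv]
    exact (one_lt_inv₀ (norm_pos_iff.mpr (mt inv_eq_zero.mpr hne))).mpr (hα n).1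
  have hint (n : ℕ) : ∃ z : ℤ, (p : ℚ_[p]) ^ k (n + 1) * c (n + 1) = z :=
    exists_intCast_eq_zpow_mul_of_norm_le_one <| norm_le_one_of_one_lt_norm_div
      (norm_intCast_add_le_one_of_sq_eq_intCast hδ _) ((hrep (n + 1)).2 ▸ hlarge n)
  choose q hq using hint
  obtain ⟨m, N, hN, hper⟩ := exists_add_eq_of_frequently_sq_lt (α := fun n ↦ α (n + 1)) hδ hΔ
    (fun n ↦ by exact_mod_cast hq n ▸ hden (n + 1)) (fun n ↦ by rw [(hrep (n + 1)).2, hq])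
    (fun n ↦ (hα (n + 1)).2) (frequently_atTop_add_nat hneg 1)
  exact ⟨m + 1, N, hN, by rwa [add_right_comm]⟩

end Padic

/-- if there is a strictly increasing sequence of indices `t_n`
with `b_{t_n}² < Δ` (negative norm of the real embeddings), then the BCF
expansion of `α` is periodic. -/
theorem browkin_periodic_of_negative_norms
    (p : ℕ) [Fact p.Prime] (hp : Odd p)
    (α : ℚ_[p]) (hirr : ∀ q : ℚ, α ≠ (q : ℚ_[p]))
    (αs : ℕ → ℚ_[p]) (a : ℕ → ℚ) (hα0 : αs 0 = α) (hbcf : IsBCF p αs a)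
    (δ : ℚ_[p]) (Δ : ℤ) (hδ : δ ^ 2 = (Δ : ℚ_[p])) (hΔ : ¬IsSquare Δ)
    (b c : ℕ → ℤ) (kk : ℕ → ℤ)
    (hrep : ∀ n, c n ≠ 0 ∧ ¬((p : ℤ) ∣ c n) ∧
      αs n = ((b n : ℚ_[p]) + δ) / ((p : ℚ_[p]) ^ (kk n) * (c n : ℚ_[p])))
    (hneg : ∃ f : ℕ → ℕ, StrictMono f ∧ ∀ n : ℕ, (b (f n)) ^ 2 < Δ) :
    ∃ m N : ℕ, 1 ≤ N ∧ αs (m + N) = αs m := by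
  obtain ⟨f, hf, hfneg⟩ := hneg
  exact browkin_periodic_of_negative_norms_general (fun n ↦ (hbcf n).2) hδ hΔ
    (fun n ↦ ⟨(hrep n).1, (hrep n).2.2⟩) (hf.tendsto_atTop.frequently (.of_forall hfneg))
end

section
/- Let p be a prime, k ≥ 1 an integer, and (x_j)_{j≥0} a sequence of rationals. Consider the continued fraction with partial quotients e_{2j} = x_j/p^k and e_{2j+1} = (−1)^j/p^k for j ≥ 0, with continuant sequences (A_n), (B_n), and the continued fraction with partial quotients d_j = (−1)^j x_j/p^{2k} for j ≥ 0, with continuant sequences (A•_n), (B•_n). Then for every i ≥ 0: (a) B_{2i} = (−1)^i (B•_i − B•_{i−1}); (b) B_{2i+1} = p^{−k} B•_i; (c) A_{2i+1} = A•_i + B•_i; (d) A_{2i} = (−1)^i p^k (A•_i − A•_{i−1} + B•_i − B•_{i−1}). -/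
/-- `A`, `B` are the continuant (convergent numerator/denominator) sequences of
the continued fraction with partial quotients `a`:
`A (−1) = 1`, `A 0 = a 0`, `A n = a n * A (n−1) + A (n−2)`, and
`B (−1) = 0`, `B 0 = 1`, `B n = a n * B (n−1) + B (n−2)`. -/
def IsContinuants (a : ℕ → ℚ) (A B : ℤ → ℚ) : Prop :=
  A (-1) = 1 ∧ A 0 = a 0 ∧ B (-1) = 0 ∧ B 0 = 1 ∧
  ∀ n : ℕ, 1 ≤ n → (A n = a n * A ((n : ℤ) - 1) + A ((n : ℤ) - 2) ∧
    B n = a n * B ((n : ℤ) - 1) + B ((n : ℤ) - 2))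

/-!
The recurrence at an odd index expresses an even term through its odd neighbours,
`e_{2i+1} u_{2i} = u_{2i+1} - u_{2i-1}`. Because the odd partial quotients alternate in sign,
eliminating the even terms needs no division: `i ↦ u_{2i+1}` satisfies the recurrence with
partial quotients `d_i = e_{2i+1} e_{2i}`. A solution is determined by its values at `-1` and `0`,
so comparing these identifies `A_{2i+1}` and `B_{2i+1}`; the even terms then follow.
-/

/-- The three-term recurrence of the continued fraction with partial quotients `c`. As in
`IsContinuants`, indices start at `-1`, so `c 0` does not enter and values below `-1` are
unconstrained. -/
def IsContinuantSeq {R : Type*} [Semiring R] (c : ℕ → R) (u : ℤ → R) : Prop :=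
  ∀ n : ℕ, u (n + 1) = c (n + 1) * u n + u (n - 1)

/-- The analogue of `IsContinuants` over an arbitrary semiring: `A` and `B` are the convergent
numerators and denominators of the continued fraction with partial quotients `c`. -/
structure IsContinuantPair {R : Type*} [Semiring R] (c : ℕ → R) (A B : ℤ → R) : Prop where
  num_neg_one : A (-1) = 1
  num_zero : A 0 = c 0
  den_neg_one : B (-1) = 0
  den_zero : B 0 = 1
  num_rec : IsContinuantSeq c A
  den_rec : IsContinuantSeq c B

theorem IsContinuants.isContinuantPair {c : ℕ → ℚ} {A B : ℤ → ℚ} (h : IsContinuants c A B) :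
    IsContinuantPair c A B := by
  obtain ⟨hA₁, hA₀, hB₁, hB₀, hrec⟩ := h
  have hindex (n : ℕ) : (n : ℤ) + 1 - 2 = n - 1 := by ring
  have hrec' (n : ℕ) := hrec (n + 1) n.succ_pos
  simp only [Nat.cast_succ, add_sub_cancel_right, hindex] at hrec'
  exact ⟨hA₁, hA₀, hB₁, hB₀, fun n ↦ (hrec' n).1, fun n ↦ (hrec' n).2⟩

namespace IsContinuantSeq

theorem add {R : Type*} [Semiring R] {c : ℕ → R} {u v : ℤ → R}
    (hu : IsContinuantSeq c u) (hv : IsContinuantSeq c v) : IsContinuantSeq c (u + v) := by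
  intro n
  simp only [Pi.add_apply, hu n, hv n, mul_add]
  abel

theorem mul_const {R : Type*} [Semiring R] {c : ℕ → R} {u : ℤ → R}
    (hu : IsContinuantSeq c u) (r : R) : IsContinuantSeq c fun n ↦ u n * r := by
  intro n
  simp only [hu n, add_mul, mul_assoc]

theorem eqOn {R : Type*} [Semiring R] {c : ℕ → R} {u v : ℤ → R}
    (hu : IsContinuantSeq c u) (hv : IsContinuantSeq c v)
    (h_neg_one : u (-1) = v (-1)) (h_zero : u 0 = v 0) : Set.EqOn u v (Set.Ici (-1)) := by
  have consecutive (n : ℕ) : u (n - 1) = v (n - 1) ∧ u n = v n := by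
    induction n with
    | zero => simpa using ⟨h_neg_one, h_zero⟩
    | succ n ih =>
      push_cast
      rw [add_sub_cancel_right, hu n, hv n, ih.1, ih.2]
      exact ⟨rfl, rfl⟩
  intro m hm
  obtain ⟨n, hn⟩ := Int.le.dest hm
  obtain rfl : m = n - 1 := by lia
  exact (consecutive n).1

theorem odd_mul_even {R : Type*} [Ring R] {e : ℕ → R} {u : ℤ → R} (hu : IsContinuantSeq e u)
    (i : ℕ) : e (2 * i + 1) * u (2 * i) = u (2 * i + 1) - u (2 * (i - 1) + 1) := by
  have hrec := hu (2 * i)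
  have hindex : (2 * i - 1 : ℤ) = 2 * (i - 1) + 1 := by ring
  push_cast at hrec
  rw [hrec, hindex, add_sub_cancel_right]

theorem odd_subseq {R : Type*} [Ring R] {e d : ℕ → R} {u : ℤ → R} (hu : IsContinuantSeq e u)
    (halt : ∀ j, e (2 * (j + 1) + 1) = -e (2 * j + 1))
    (hd : ∀ j, d j = e (2 * j + 1) * e (2 * j)) :
    IsContinuantSeq d fun i ↦ u (2 * i + 1) := by
  intro n
  have heven : u (2 * (n + 1)) = e (2 * (n + 1)) * u (2 * n + 1) + u (2 * n) := by
    have hrec := hu (2 * n + 1)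
    push_cast at hrec
    rwa [add_sub_cancel_right, add_assoc (2 * n : ℤ), one_add_one_eq_two, ← mul_add_one] at hrec
  have hnext : e (2 * (n + 1) + 1) * u (2 * (n + 1)) =
      u (2 * (n + 1) + 1) - u (2 * n + 1) := by
    simpa using hu.odd_mul_even (n + 1)
  calc u (2 * (n + 1) + 1)
      = e (2 * (n + 1) + 1) * u (2 * (n + 1)) + u (2 * n + 1) :=
        sub_eq_iff_eq_add.mp hnext.symm
    _ = d (n + 1) * u (2 * n + 1) + (u (2 * n + 1) - e (2 * n + 1) * u (2 * n)) := by
        rw [heven, mul_add, ← mul_assoc, ← hd, halt]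
        noncomm_ring
    _ = d (n + 1) * u (2 * n + 1) + u (2 * (n - 1) + 1) := by
        rw [hu.odd_mul_even, sub_sub_cancel]

theorem even_eq {R : Type*} [Ring R] {e : ℕ → R} {u : ℤ → R} {q : Rˣ}
    (hu : IsContinuantSeq e u) (hodd : ∀ j, e (2 * j + 1) = (-1) ^ j * ↑q⁻¹) (i : ℕ) :
    u (2 * i) = (-1) ^ i * q * (u (2 * i + 1) - u (2 * (i - 1) + 1)) := by
  rw [← hu.odd_mul_even, hodd]
  rcases neg_one_pow_eq_or R i with hsign | hsign <;> simp [hsign]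

end IsContinuantSeq

namespace IsContinuantPair

theorem num_one {R : Type*} [Semiring R] {c : ℕ → R} {A B : ℤ → R}
    (h : IsContinuantPair c A B) : A 1 = c 1 * c 0 + 1 := by
  simpa [h.num_zero, h.num_neg_one] using h.num_rec 0

theorem den_one {R : Type*} [Semiring R] {c : ℕ → R} {A B : ℤ → R}
    (h : IsContinuantPair c A B) : B 1 = c 1 := by
  simpa [h.den_zero, h.den_neg_one] using h.den_rec 0

variable {R : Type*} [Ring R] {e d : ℕ → R} {A B A' B' : ℤ → R}

theorem num_odd (h : IsContinuantPair e A B) (h' : IsContinuantPair d A' B')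
    (halt : ∀ j, e (2 * (j + 1) + 1) = -e (2 * j + 1))
    (hd : ∀ j, d j = e (2 * j + 1) * e (2 * j)) :
    Set.EqOn (fun i ↦ A (2 * i + 1)) (A' + B') (Set.Ici (-1)) := by
  refine (h.num_rec.odd_subseq halt hd).eqOn (h'.num_rec.add h'.den_rec) ?_ ?_
  · simp [h.num_neg_one, h'.num_neg_one, h'.den_neg_one]
  · simp [h.num_one, h'.num_zero, h'.den_zero, hd]

theorem den_odd (h : IsContinuantPair e A B) (h' : IsContinuantPair d A' B')
    (halt : ∀ j, e (2 * (j + 1) + 1) = -e (2 * j + 1))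
    (hd : ∀ j, d j = e (2 * j + 1) * e (2 * j)) :
    Set.EqOn (fun i ↦ B (2 * i + 1)) (fun i ↦ B' i * e 1) (Set.Ici (-1)) := by
  refine (h.den_rec.odd_subseq halt hd).eqOn (h'.den_rec.mul_const (e 1)) ?_ ?_
  · simp [h.den_neg_one, h'.den_neg_one]
  · simp [h.den_one, h'.den_zero]

end IsContinuantPair

theorem continuants_folding_general {R : Type*} [CommRing R] (q : Rˣ) {e d : ℕ → R}
    (hodd : ∀ j, e (2 * j + 1) = (-1) ^ j * ↑q⁻¹) (hd : ∀ j, d j = e (2 * j + 1) * e (2 * j))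
    {A B A' B' : ℤ → R} (h : IsContinuantPair e A B) (h' : IsContinuantPair d A' B') (i : ℕ) :
    B (2 * i) = (-1) ^ i * (B' i - B' (i - 1)) ∧
      B (2 * i + 1) = B' i * ↑q⁻¹ ∧
      A (2 * i + 1) = A' i + B' i ∧
      A (2 * i) = (-1) ^ i * q * (A' i - A' (i - 1) + B' i - B' (i - 1)) := by
  have halt (j : ℕ) : e (2 * (j + 1) + 1) = -e (2 * j + 1) := by rw [hodd, hodd]; ring
  have he₁ : e 1 = ↑q⁻¹ := by simpa using hodd 0
  have hA {m : ℤ} (hm : -1 ≤ m) : A (2 * m + 1) = A' m + B' m := h.num_odd h' halt hd hm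
  have hB {m : ℤ} (hm : -1 ≤ m) : B (2 * m + 1) = B' m * ↑q⁻¹ := by
    simpa [he₁] using h.den_odd h' halt hd hm
  have hi : (-1 : ℤ) ≤ i := by lia
  have hi' : (-1 : ℤ) ≤ i - 1 := by lia
  refine ⟨?_, hB hi, hA hi, ?_⟩
  · rw [h.den_rec.even_eq hodd, hB hi, hB hi', ← sub_mul, mul_assoc, mul_left_comm (q : R),
      q.mul_inv, mul_one]
  · rw [h.num_rec.even_eq hodd, hA hi, hA hi', add_sub_add_comm, add_sub_assoc]

/-- relations between the continuants of the continued fraction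
with partial quotients `e_{2j} = x_j/p^k`, `e_{2j+1} = (−1)^j/p^k` and those of
the continued fraction with partial quotients `d_j = (−1)^j x_j / p^{2k}`. -/
theorem continuants_folding
    (p : ℕ) (hp : p.Prime) (k : ℕ) (hk : 1 ≤ k) (x : ℕ → ℚ)
    (e d : ℕ → ℚ)
    (he : ∀ j : ℕ, e (2 * j) = x j / (p : ℚ) ^ k ∧
      e (2 * j + 1) = (-1 : ℚ) ^ j / (p : ℚ) ^ k)
    (hd : ∀ j : ℕ, d j = (-1 : ℚ) ^ j * x j / (p : ℚ) ^ (2 * k))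
    (A B Ab Bb : ℤ → ℚ)
    (hAB : IsContinuants e A B) (hAbBb : IsContinuants d Ab Bb) :
    ∀ i : ℕ,
      B (2 * (i : ℤ)) = (-1 : ℚ) ^ i * (Bb (i : ℤ) - Bb ((i : ℤ) - 1)) ∧
      B (2 * (i : ℤ) + 1) = Bb (i : ℤ) / (p : ℚ) ^ k ∧
      A (2 * (i : ℤ) + 1) = Ab (i : ℤ) + Bb (i : ℤ) ∧
      A (2 * (i : ℤ)) = (-1 : ℚ) ^ i * (p : ℚ) ^ k *
        (Ab (i : ℤ) - Ab ((i : ℤ) - 1) + Bb (i : ℤ) - Bb ((i : ℤ) - 1)) := by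
  let q : ℚˣ := Units.mk0 ((p : ℚ) ^ k) (pow_ne_zero k (mod_cast hp.ne_zero))
  have hodd (j : ℕ) : e (2 * j + 1) = (-1) ^ j * ↑q⁻¹ := (he j).2
  have hd' (j : ℕ) : d j = e (2 * j + 1) * e (2 * j) := by
    rw [hd, (he j).1, (he j).2, div_mul_div_comm, ← pow_add, two_mul]
  exact continuants_folding_general q hodd hd' hAB.isContinuantPair hAbBb.isContinuantPair
end
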